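/- Let μ_1, …, μ_N be integral linear forms on ℝ^d (i.e., with coefficients in ℤ) that generate (ℝ^d)* as a cone, let τ be an admissible μ-chamber, and let h : ℝ^d → ℝ be a homogeneous polynomial of degree m. Then there exist a finite set Ψ ⊆ ℚ^N and, for each multi-index α ∈ ℕ^N with |α| = α_1 + ⋯ + α_N ≤ d + m, a function c_α : ℝ^N → ℝ which is a finite real linear combination of products of at most d + m − |α| functions of the form b ↦ {⟨η, b⟩} with η ∈ Ψ (an empty product meaning the constant 1), such that for every b in the topological closure of τ both of the following hold: (a) Σ_{x ∈ ℤ^d ∩ P(b)} h(x) = Σ_{|α| ≤ d+m} c_α(b)·b^α, where b^α = b_1^{α_1}⋯b_N^{α_N} and the left-hand sum is finite since P(b) is compact; (b) Σ_{|α| = d+m} c_α(b)·b^α = ∫_{P(b)} h(x) dx, the integral being with respect to Lebesgue measure on ℝ^d. -/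

import Mathlib

open MeasureTheory

/-- `f` is a finite real linear combination of products of at most `k` functions of the
form `b ↦ {⟨η, b⟩}` with `η ∈ Ψ` (an empty product meaning the constant `1`). -/
def IsStepPoly {N : ℕ} (Ψ : Finset (Fin N → ℚ)) (k : ℕ) (f : (Fin N → ℝ) → ℝ) : Prop :=
  ∃ (n : ℕ) (coef : Fin n → ℝ) (L : Fin n → List (Fin N → ℚ)),
    (∀ i, (L i).length ≤ k ∧ ∀ η ∈ L i, η ∈ Ψ) ∧
    ∀ b : Fin N → ℝ,
      f b = ∑ i, coef i *
        ((L i).map (fun η => Int.fract (∑ j, (η j : ℝ) * b j))).prod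

/-! ### Step polynomials -/

namespace IsStepPoly

variable {N : ℕ} {Ψ : Finset (Fin N → ℚ)} {k : ℕ} {f g : (Fin N → ℝ) → ℝ}

theorem zero : IsStepPoly Ψ k 0 :=
  ⟨0, Fin.elim0, Fin.elim0, fun i => i.elim0, fun b => by simp⟩

theorem add (hf : IsStepPoly Ψ k f) (hg : IsStepPoly Ψ k g) : IsStepPoly Ψ k (f + g) := by
  obtain ⟨n, c, L, hL, hf⟩ := hf
  obtain ⟨n', c', L', hL', hg⟩ := hg
  refine ⟨n + n', Fin.append c c', Fin.append L L', fun i => ?_, fun b => ?_⟩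
  · refine Fin.addCases (fun i => ?_) (fun i => ?_) i
    · simpa using hL i
    · simpa using hL' i
  · simp [Fin.sum_univ_add, hf, hg]

theorem smul (a : ℝ) (hf : IsStepPoly Ψ k f) : IsStepPoly Ψ k (a • f) := by
  obtain ⟨n, c, L, hL, hf⟩ := hf
  refine ⟨n, fun i => a * c i, L, hL, fun b => ?_⟩
  simp [hf, Finset.mul_sum, mul_assoc]

theorem of_list {L : List (Fin N → ℚ)} (hL : L.length ≤ k) (hΨ : ∀ η ∈ L, η ∈ Ψ) :
    IsStepPoly Ψ k
      (fun b => (L.map (fun η => Int.fract (∑ j, (η j : ℝ) * b j))).prod) :=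
  ⟨1, fun _ => 1, fun _ => L, fun _ => ⟨hL, hΨ⟩, fun b => by simp⟩

theorem exists_forall_abs_le (hf : IsStepPoly Ψ k f) : ∃ C, ∀ b, |f b| ≤ C := by
  obtain ⟨n, c, L, -, hf⟩ := hf
  refine ⟨∑ i, |c i|, fun b => ?_⟩
  rw [hf]
  refine (Finset.abs_sum_le_sum_abs _ _).trans (Finset.sum_le_sum fun i _ => ?_)
  rw [abs_mul]
  refine mul_le_of_le_one_right (abs_nonneg _) ?_
  induction L i with
  | nil => simp
  | cons η l ih =>
    rw [List.map_cons, List.prod_cons, abs_mul, abs_of_nonneg (Int.fract_nonneg _)]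
    exact mul_le_one₀ (Int.fract_lt_one _).le (abs_nonneg _) ih

theorem eq_of_zero (hf : IsStepPoly Ψ 0 f) (b b' : Fin N → ℝ) : f b = f b' := by
  obtain ⟨n, c, L, hL, hf⟩ := hf
  have hnil : ∀ i, L i = [] := fun i => List.length_eq_zero_iff.mp (Nat.le_zero.mp (hL i).1)
  simp [hf, hnil]

end IsStepPoly

/-- The functions `b ↦ b ^ α * ∏ {⟨η, b⟩}` with at most `k` factors in total. -/
def stepMonomials {N : ℕ} (Ψ : Finset (Fin N → ℚ)) (k : ℕ) : Set ((Fin N → ℝ) → ℝ) :=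
  {f | ∃ (α : Fin N → ℕ) (L : List (Fin N → ℚ)), ∑ i, α i + L.length ≤ k ∧ (∀ η ∈ L, η ∈ Ψ) ∧
    f = fun b => (L.map (fun η => Int.fract (∑ j, (η j : ℝ) * b j))).prod * ∏ i, b i ^ α i}

/-- The filtration by total degree on the algebra generated by the coordinates and the functions
`b ↦ {⟨η, b⟩}`, `η ∈ Ψ`. -/
def stepFiltration {N : ℕ} (Ψ : Finset (Fin N → ℚ)) (k : ℕ) : Submodule ℝ ((Fin N → ℝ) → ℝ) :=
  Submodule.span ℝ (stepMonomials Ψ k)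

section stepFiltration

variable {N : ℕ} {Ψ : Finset (Fin N → ℚ)} {k l : ℕ} {f g : (Fin N → ℝ) → ℝ}

theorem stepFiltration_mono (h : k ≤ l) : stepFiltration Ψ k ≤ stepFiltration Ψ l :=
  Submodule.span_mono fun _ ⟨α, L, hk, hL⟩ => ⟨α, L, hk.trans h, hL⟩

theorem stepFiltration_mono_left {Ψ' : Finset (Fin N → ℚ)} (h : Ψ ⊆ Ψ') :
    stepFiltration Ψ k ≤ stepFiltration Ψ' k :=
  Submodule.span_mono fun _ ⟨α, L, hk, hL, hf⟩ => ⟨α, L, hk, fun η hη => h (hL η hη), hf⟩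

theorem mul_mem_stepFiltration (hf : f ∈ stepFiltration Ψ k) (hg : g ∈ stepFiltration Ψ l) :
    f * g ∈ stepFiltration Ψ (k + l) := by
  have h := Submodule.mul_mem_mul hf hg
  rw [stepFiltration, stepFiltration, Submodule.span_mul_span] at h
  refine Submodule.span_mono ?_ h
  rintro _ ⟨_, ⟨α, L, hk, hL, rfl⟩, _, ⟨α', L', hl, hL', rfl⟩, rfl⟩
  refine ⟨α + α', L ++ L', ?_, ?_, ?_⟩
  · simp only [Pi.add_apply, Finset.sum_add_distrib, List.length_append]
    omega
  · intro η hη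
    exact (List.mem_append.mp hη).elim (hL η) (hL' η)
  · funext b
    simp only [Pi.mul_apply, Pi.add_apply, pow_add, Finset.prod_mul_distrib, List.map_append,
      List.prod_append]
    ring

theorem one_mem_stepFiltration : (1 : (Fin N → ℝ) → ℝ) ∈ stepFiltration Ψ k :=
  Submodule.subset_span ⟨0, [], by simp, by simp, by ext; simp⟩

theorem pow_mem_stepFiltration (hf : f ∈ stepFiltration Ψ 1) (n : ℕ) :
    f ^ n ∈ stepFiltration Ψ n := by
  induction n with
  | zero => simpa using one_mem_stepFiltration
  | succ n ih => rw [pow_succ]; exact mul_mem_stepFiltration ih hf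

theorem linear_mem_stepFiltration (η : Fin N → ℚ) :
    (fun b => ∑ j, (η j : ℝ) * b j) ∈ stepFiltration Ψ 1 := by
  have h : (fun b : Fin N → ℝ => ∑ j, (η j : ℝ) * b j) =
      ∑ j, (η j : ℝ) • fun b : Fin N → ℝ => b j := by
    ext b; simp
  rw [h]
  refine Submodule.sum_mem _ fun j _ => Submodule.smul_mem _ _ (Submodule.subset_span ?_)
  refine ⟨Pi.single j 1, [], by simp, by simp, ?_⟩
  ext b
  simp [Pi.single_apply]

theorem floor_mem_stepFiltration {η : Fin N → ℚ} (hη : η ∈ Ψ) :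
    (fun b => (⌊∑ j, (η j : ℝ) * b j⌋ : ℝ)) ∈ stepFiltration Ψ 1 := by
  have h : (fun b : Fin N → ℝ => (⌊∑ j, (η j : ℝ) * b j⌋ : ℝ)) =
      (fun b => ∑ j, (η j : ℝ) * b j) - fun b => Int.fract (∑ j, (η j : ℝ) * b j) := by
    ext b
    exact (Int.self_sub_fract _).symm
  rw [h]
  refine Submodule.sub_mem _ (linear_mem_stepFiltration η) (Submodule.subset_span ?_)
  exact ⟨0, [η], by simp, by simpa using hη, by ext; simp⟩

theorem finite_setOf_sum_le (N k : ℕ) : {α : Fin N → ℕ | ∑ i, α i ≤ k}.Finite :=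
  (Set.finite_Iic (fun _ : Fin N => k)).subset fun α (hα : ∑ i, α i ≤ k) i =>
    (Finset.single_le_sum (fun _ _ => Nat.zero_le _) (Finset.mem_univ i)).trans hα

theorem exists_isStepPoly_of_mem_stepFiltration (hf : f ∈ stepFiltration Ψ k) :
    ∃ c : (Fin N → ℕ) → (Fin N → ℝ) → ℝ,
      (∀ α : Fin N → ℕ, ∑ i, α i ≤ k → IsStepPoly Ψ (k - ∑ i, α i) (c α)) ∧
      ∀ b, f b = ∑ᶠ α ∈ {α : Fin N → ℕ | ∑ i, α i ≤ k}, c α b * ∏ i, b i ^ α i := by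
  have hfin := finite_setOf_sum_le N k
  refine Submodule.span_induction (p := fun f _ => ∃ c : (Fin N → ℕ) → (Fin N → ℝ) → ℝ,
      (∀ α : Fin N → ℕ, ∑ i, α i ≤ k → IsStepPoly Ψ (k - ∑ i, α i) (c α)) ∧
      ∀ b, f b = ∑ᶠ α ∈ {α : Fin N → ℕ | ∑ i, α i ≤ k}, c α b * ∏ i, b i ^ α i)
    ?_ ?_ ?_ ?_ hf
  · rintro _ ⟨α, L, hk, hL, rfl⟩
    refine ⟨Pi.single α fun b => (L.map (fun η => Int.fract (∑ j, (η j : ℝ) * b j))).prod,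
      fun β hβ => ?_, fun b => ?_⟩
    · by_cases h : β = α
      · subst h
        rw [Pi.single_eq_same]
        exact IsStepPoly.of_list (by omega) hL
      · rw [Pi.single_eq_of_ne h]
        exact IsStepPoly.zero
    · rw [finsum_mem_eq_finite_toFinset_sum _ hfin, Finset.sum_eq_single α]
      · simp
      · intro β _ h
        simp [Pi.single_eq_of_ne h]
      · intro h
        exact absurd (by simp; omega) h
  · exact ⟨0, fun _ _ => IsStepPoly.zero, fun b => by simp⟩
  · rintro f g - - ⟨c, hc, hf⟩ ⟨c', hc', hg⟩
    refine ⟨c + c', fun α hα => (hc α hα).add (hc' α hα), fun b => ?_⟩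
    rw [Pi.add_apply, hf, hg, ← finsum_mem_add_distrib hfin]
    simp [add_mul]
  · rintro a f - ⟨c, hc, hf⟩
    refine ⟨a • c, fun α hα => (hc α hα).smul a, fun b => ?_⟩
    rw [Pi.smul_apply, hf, smul_eq_mul, finsum_mem_eq_finite_toFinset_sum _ hfin,
      finsum_mem_eq_finite_toFinset_sum _ hfin, Finset.mul_sum]
    simp [mul_assoc]

end stepFiltration

/-! ### Regularized exponential sums over the lattice -/

/-- The difference operator `f ↦ f - f (· + v)`. -/
def latticeDiff {d : ℕ} (v : Fin d → ℤ) : Module.End ℝ ((Fin d → ℤ) → ℝ) :=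
  LinearMap.id - LinearMap.funLeft ℝ ℝ (· + v)

/-- The composition of the difference operators along a list of vectors. -/
def latticeDiffs {d : ℕ} (vs : List (Fin d → ℤ)) : Module.End ℝ ((Fin d → ℤ) → ℝ) :=
  (vs.map latticeDiff).prod

/-- The pairing of a real linear form with an integer vector. -/
def latticePairing {d : ℕ} (l : Fin d → ℝ) (x : Fin d → ℤ) : ℝ := ∑ i, l i * x i

/-- The power series `exp (a X)`. -/
noncomputable def expSeries (a : ℝ) : PowerSeries ℝ :=
  PowerSeries.rescale a (PowerSeries.exp ℝ)

/-- The exponential sum `∑ p x * exp (⟨l, x⟩ X)` of a finitely supported function. -/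
noncomputable def expSum {d : ℕ} (l : Fin d → ℝ) : ((Fin d → ℤ) →₀ ℝ) →ₗ[ℝ] PowerSeries ℝ :=
  Finsupp.linearCombination ℝ fun x => expSeries (latticePairing l x)

/-- The factor by which `latticeDiffs vs` multiplies exponential sums. -/
noncomputable def expFactor {d : ℕ} (l : Fin d → ℝ) (vs : List (Fin d → ℤ)) : PowerSeries ℝ :=
  (vs.map fun v => 1 - expSeries (-latticePairing l v)).prod

section regularization

variable {d : ℕ} {l : Fin d → ℝ}

theorem latticePairing_add (x y : Fin d → ℤ) :
    latticePairing l (x + y) = latticePairing l x + latticePairing l y := by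
  simp [latticePairing, mul_add, Finset.sum_add_distrib]

theorem latticePairing_neg (x : Fin d → ℤ) : latticePairing l (-x) = -latticePairing l x := by
  simp [latticePairing]

theorem expSeries_add (a b : ℝ) : expSeries (a + b) = expSeries a * expSeries b :=
  (PowerSeries.exp_mul_exp_eq_exp_add a b).symm

theorem coeff_expSeries (a : ℝ) (n : ℕ) :
    PowerSeries.coeff n (expSeries a) = a ^ n * (n.factorial : ℝ)⁻¹ := by
  simp [expSeries, PowerSeries.coeff_rescale, PowerSeries.coeff_exp]

theorem latticeDiff_apply (v : Fin d → ℤ) (f : (Fin d → ℤ) → ℝ) (x : Fin d → ℤ) :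
    latticeDiff v f x = f x - f (x + v) := rfl

theorem commute_latticeDiff (v w : Fin d → ℤ) : Commute (latticeDiff v) (latticeDiff w) := by
  ext f x
  simp only [Module.End.mul_apply, latticeDiff_apply, add_right_comm x v w]
  ring

theorem latticeDiffs_cons (v : Fin d → ℤ) (vs : List (Fin d → ℤ)) (f : (Fin d → ℤ) → ℝ) :
    latticeDiffs (v :: vs) f = latticeDiff v (latticeDiffs vs f) := by
  simp [latticeDiffs]

theorem latticeDiffs_append (vs ws : List (Fin d → ℤ)) (f : (Fin d → ℤ) → ℝ) :
    latticeDiffs (vs ++ ws) f = latticeDiffs vs (latticeDiffs ws f) := by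
  simp [latticeDiffs]

theorem latticeDiffs_append_comm (vs ws : List (Fin d → ℤ)) (f : (Fin d → ℤ) → ℝ) :
    latticeDiffs (vs ++ ws) f = latticeDiffs ws (latticeDiffs vs f) := by
  have h : Commute (latticeDiffs vs) (latticeDiffs ws) := by
    refine Commute.list_prod_left _ _ fun a ha => Commute.list_prod_right _ _ fun b hb => ?_
    obtain ⟨v, -, rfl⟩ := List.mem_map.mp ha
    obtain ⟨w, -, rfl⟩ := List.mem_map.mp hb
    exact commute_latticeDiff v w
  rw [latticeDiffs_append, ← Module.End.mul_apply, h.eq, Module.End.mul_apply]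

theorem expFactor_append (vs ws : List (Fin d → ℤ)) :
    expFactor l (vs ++ ws) = expFactor l vs * expFactor l ws := by
  simp [expFactor]

theorem one_sub_expSeries_ne_zero {a : ℝ} (ha : a ≠ 0) : 1 - expSeries a ≠ 0 := by
  intro h
  have h1 := congrArg (PowerSeries.coeff 1) h
  rw [map_sub, coeff_expSeries] at h1
  simp [PowerSeries.coeff_one, ha] at h1

theorem expFactor_ne_zero {vs : List (Fin d → ℤ)} (h : ∀ v ∈ vs, latticePairing l v ≠ 0) :
    expFactor l vs ≠ 0 := by
  refine List.prod_ne_zero fun h0 => ?_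
  obtain ⟨v, hv, hv0⟩ := List.mem_map.mp h0
  exact one_sub_expSeries_ne_zero (neg_ne_zero.mpr (h v hv)) hv0

theorem exists_latticeDiff_coe (v : Fin d → ℤ) (p : (Fin d → ℤ) →₀ ℝ) :
    ∃ q : (Fin d → ℤ) →₀ ℝ, latticeDiff v p = q ∧
      expSum l q = (1 - expSeries (-latticePairing l v)) * expSum l p := by
  refine ⟨p - p.mapDomain (· + -v), ?_, ?_⟩
  · ext x
    rw [latticeDiff_apply, Finsupp.sub_apply]
    congr 1
    conv_rhs => rw [← add_neg_cancel_right x v]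
    exact (Finsupp.mapDomain_apply (add_left_injective (-v)) p (x + v)).symm
  · rw [map_sub, sub_mul, one_mul]
    congr 1
    rw [expSum, Finsupp.linearCombination_mapDomain, Finsupp.linearCombination_apply,
      Finsupp.linearCombination_apply, Finsupp.sum, Finsupp.sum, Finset.mul_sum]
    refine Finset.sum_congr rfl fun x _ => ?_
    rw [Function.comp_apply, latticePairing_add, latticePairing_neg, expSeries_add,
      mul_smul_comm, mul_comm]

theorem exists_latticeDiffs_coe (vs : List (Fin d → ℤ)) (p : (Fin d → ℤ) →₀ ℝ) :
    ∃ q : (Fin d → ℤ) →₀ ℝ, latticeDiffs vs p = q ∧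
      expSum l q = expFactor l vs * expSum l p := by
  induction vs with
  | nil => exact ⟨p, by simp [latticeDiffs], by simp [expFactor]⟩
  | cons v vs ih =>
    obtain ⟨q, hq, hq'⟩ := ih
    obtain ⟨r, hr, hr'⟩ := exists_latticeDiff_coe (l := l) v q
    refine ⟨r, by rw [latticeDiffs_cons, hq, hr], ?_⟩
    rw [hr', hq']
    simp [expFactor, mul_assoc]

variable (l) in
/-- The graph of the regularized exponential sum: pairs `(f, φ)` such that, after applying finitely
many difference operators in directions not orthogonal to `l`, `f` becomes finitely supported and
`X ^ d` times its exponential sum is the corresponding multiple of `φ`. -/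
noncomputable def regularizedSum : Submodule ℝ (((Fin d → ℤ) → ℝ) × PowerSeries ℝ) where
  carrier := {z | ∃ vs : List (Fin d → ℤ), (∀ v ∈ vs, latticePairing l v ≠ 0) ∧
    ∃ p : (Fin d → ℤ) →₀ ℝ, latticeDiffs vs z.1 = p ∧
      PowerSeries.X ^ d * expSum l p = expFactor l vs * z.2}
  zero_mem' := ⟨[], by simp, 0, by simp, by simp⟩
  add_mem' := by
    rintro ⟨f, φ⟩ ⟨g, ψ⟩ ⟨vs, hvs, p, hp, hp'⟩ ⟨ws, hws, q, hq, hq'⟩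
    obtain ⟨p₁, hp₁, hp₁'⟩ := exists_latticeDiffs_coe (l := l) ws p
    obtain ⟨q₁, hq₁, hq₁'⟩ := exists_latticeDiffs_coe (l := l) vs q
    refine ⟨vs ++ ws, fun v hv => (List.mem_append.mp hv).elim (hvs v) (hws v), p₁ + q₁, ?_, ?_⟩
    · dsimp only [Prod.mk_add_mk] at hp hq ⊢
      rw [map_add, latticeDiffs_append_comm _ _ f, latticeDiffs_append, hp, hq, hp₁, hq₁]
      rfl
    · dsimp only [Prod.mk_add_mk] at hp' hq' ⊢
      rw [map_add, hp₁', hq₁', expFactor_append]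
      linear_combination expFactor l ws * hp' + expFactor l vs * hq'
  smul_mem' := by
    rintro a ⟨f, φ⟩ ⟨vs, hvs, p, hp, hp'⟩
    refine ⟨vs, hvs, a • p, ?_, ?_⟩
    · dsimp only [Prod.smul_mk] at hp ⊢
      rw [map_smul, hp]
      rfl
    · dsimp only [Prod.smul_mk] at hp' ⊢
      rw [map_smul, mul_smul_comm, hp', mul_smul_comm]

theorem eq_zero_of_mem_regularizedSum {φ : PowerSeries ℝ} (h : (0, φ) ∈ regularizedSum l) :
    φ = 0 := by
  obtain ⟨vs, hvs, p, hp, hp'⟩ := h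
  have hp0 : p = 0 := by
    ext x
    simpa using (congrFun hp x).symm
  rw [hp0, map_zero, mul_zero, eq_comm] at hp'
  exact (mul_eq_zero.mp hp').resolve_left (expFactor_ne_zero hvs)

theorem coe_mem_regularizedSum (p : (Fin d → ℤ) →₀ ℝ) :
    (⇑p, PowerSeries.X ^ d * expSum l p) ∈ regularizedSum l :=
  ⟨[], by simp, p, by simp [latticeDiffs], by simp [expFactor]⟩

/-- The span of the functions on the lattice invariant under some vector of `V`. -/
def invariantSpan (V : Set (Fin d → ℤ)) : Submodule ℝ ((Fin d → ℤ) → ℝ) :=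
  Submodule.span ℝ {f | ∃ v ∈ V, ∀ x, f (x + v) = f x}

theorem invariantSpan_mono {V W : Set (Fin d → ℤ)} (h : V ⊆ W) :
    invariantSpan V ≤ invariantSpan W :=
  Submodule.span_mono fun _ ⟨v, hv, hf⟩ => ⟨v, h hv, hf⟩

theorem mem_regularizedSum_of_mem_invariantSpan {V : Set (Fin d → ℤ)}
    (hV : ∀ v ∈ V, latticePairing l v ≠ 0) {f : (Fin d → ℤ) → ℝ} (hf : f ∈ invariantSpan V) :
    (f, 0) ∈ regularizedSum l := by
  suffices h : invariantSpan V ≤ (regularizedSum l).comap (LinearMap.inl ℝ _ _) from h hf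
  refine Submodule.span_le.mpr ?_
  rintro f ⟨v, hv, hf⟩
  refine ⟨[v], by simpa using hV v hv, 0, ?_, by simp⟩
  ext x
  simp [latticeDiffs, latticeDiff_apply, hf]

end regularization

/-! ### Simplicial cones -/

/-- The indicator function of the lattice points `x` with `⟨r, x⟩ ≤ t`. -/
noncomputable def halfSpaceIndicator {d : ℕ} (r : Fin d → ℤ) (t : ℝ) (x : Fin d → ℤ) : ℝ :=
  if ((r ⬝ᵥ x : ℤ) : ℝ) ≤ t then 1 else 0

/-- The indicator function of the lattice points `x` with `M x ≤ t`. -/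
noncomputable def coneIndicator {d : ℕ} (M : Matrix (Fin d) (Fin d) ℤ) (t : Fin d → ℝ) :
    (Fin d → ℤ) → ℝ :=
  ∏ i, halfSpaceIndicator (M.row i) (t i)

section unimodular

open scoped Matrix

variable {d : ℕ} {l : Fin d → ℝ}

theorem exists_mul_one_sub_expSeries_eq_X {a : ℝ} (ha : a ≠ 0) :
    ∃ q : PowerSeries ℝ, (1 - expSeries a) * q = PowerSeries.X := by
  have h0 : PowerSeries.X ∣ 1 - expSeries a := by
    rw [PowerSeries.X_dvd_iff, ← PowerSeries.coeff_zero_eq_constantCoeff_apply, map_sub,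
      coeff_expSeries]
    simp
  obtain ⟨u, hu⟩ := h0
  have hu0 : PowerSeries.constantCoeff u ≠ 0 := by
    have h1 := congrArg (PowerSeries.coeff 1) hu
    rw [map_sub, coeff_expSeries, ← PowerSeries.coeff_zero_eq_constantCoeff_apply,
      show (1 : ℕ) = 0 + 1 from rfl, PowerSeries.coeff_succ_X_mul] at *
    intro h
    rw [h] at h1
    simp [PowerSeries.coeff_one, ha] at h1
  exact ⟨u⁻¹, by rw [hu, mul_assoc, PowerSeries.mul_inv_cancel u hu0, mul_one]⟩

/-- The columns of the inverse of a unimodular matrix. -/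
noncomputable def edgeVector (U : Matrix (Fin d) (Fin d) ℤ) (j : Fin d) : Fin d → ℤ :=
  U⁻¹ *ᵥ Pi.single j 1

theorem dotProduct_edgeVector {U : Matrix (Fin d) (Fin d) ℤ} (hU : IsUnit U.det) (i j : Fin d) :
    U.row i ⬝ᵥ edgeVector U j = if i = j then 1 else 0 := by
  have h : U *ᵥ edgeVector U j = Pi.single j 1 := by
    rw [edgeVector, Matrix.mulVec_mulVec, Matrix.mul_nonsing_inv U hU, Matrix.one_mulVec]
  have hi := congrFun h i
  rw [Pi.single_apply] at hi
  exact hi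

theorem edgeVector_ne_zero {U : Matrix (Fin d) (Fin d) ℤ} (hU : IsUnit U.det) (j : Fin d) :
    edgeVector U j ≠ 0 := by
  intro h
  simpa [h] using dotProduct_edgeVector hU j j

theorem latticeDiffs_edgeVector_coneIndicator {U : Matrix (Fin d) (Fin d) ℤ} (hU : IsUnit U.det)
    (t : Fin d → ℝ) (js : List (Fin d)) (hjs : js.Nodup) :
    latticeDiffs (js.map (edgeVector U)) (coneIndicator U t) =
      ∏ i, fun x => if i ∈ js then (if U.row i ⬝ᵥ x = ⌊t i⌋ then 1 else 0)
        else halfSpaceIndicator (U.row i) (t i) x := by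
  induction js with
  | nil => ext x; simp [latticeDiffs, coneIndicator]
  | cons j js ih =>
    rw [List.nodup_cons] at hjs
    rw [List.map_cons, latticeDiffs_cons, ih hjs.2]
    ext x
    simp only [latticeDiff_apply, Finset.prod_apply, dotProduct_add, dotProduct_edgeVector hU,
      halfSpaceIndicator]
    have key : ∀ F G H : Fin d → ℝ, F j - G j = H j → (∀ i ≠ j, G i = F i) →
        (∀ i ≠ j, H i = F i) → ∏ i, F i - ∏ i, G i = ∏ i, H i := by
      intro F G H h0 h1 h2
      rw [← Finset.mul_prod_erase _ F (Finset.mem_univ j),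
        ← Finset.mul_prod_erase _ G (Finset.mem_univ j),
        ← Finset.mul_prod_erase _ H (Finset.mem_univ j), ← h0,
        Finset.prod_congr rfl fun i hi => h1 i (Finset.ne_of_mem_erase hi),
        Finset.prod_congr rfl fun i hi => h2 i (Finset.ne_of_mem_erase hi), sub_mul]
    refine key _ _ _ ?_ (fun i hi => ?_) fun i hi => ?_
    · simp only [hjs.1, if_false, List.mem_cons_self, if_true, ← Int.le_floor]
      split_ifs <;> first | omega | norm_num
    · simp [hi]
    · simp [hi]

theorem exists_coneIndicator_mem_regularizedSum {U : Matrix (Fin d) (Fin d) ℤ}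
    (hU : IsUnit U.det) (hl : ∀ j, latticePairing l (edgeVector U j) ≠ 0) :
    ∃ Q : PowerSeries ℝ, ∀ t : Fin d → ℝ,
      (coneIndicator U t,
        expSeries (∑ j, ⌊t j⌋ * latticePairing l (edgeVector U j)) * Q) ∈ regularizedSum l := by
  choose q hq using fun j => exists_mul_one_sub_expSeries_eq_X (neg_ne_zero.mpr (hl j))
  refine ⟨∏ j, q j, fun t => ⟨Finset.univ.toList.map (edgeVector U), ?_,
    Finsupp.single (U⁻¹ *ᵥ fun j => ⌊t j⌋) 1, ?_, ?_⟩⟩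
  · intro v hv
    obtain ⟨j, -, rfl⟩ := List.mem_map.mp hv
    exact hl j
  · rw [latticeDiffs_edgeVector_coneIndicator hU t _ (Finset.nodup_toList _)]
    ext x
    have h : (∀ i, U.row i ⬝ᵥ x = ⌊t i⌋) ↔ (U⁻¹ *ᵥ fun j => ⌊t j⌋) = x := by
      constructor
      · intro h
        have : U *ᵥ x = fun j => ⌊t j⌋ := funext h
        rw [← this, Matrix.mulVec_mulVec, Matrix.nonsing_inv_mul U hU, Matrix.one_mulVec]
      · rintro rfl i
        have : U *ᵥ (U⁻¹ *ᵥ fun j => ⌊t j⌋) = fun j => ⌊t j⌋ := by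
          rw [Matrix.mulVec_mulVec, Matrix.mul_nonsing_inv U hU, Matrix.one_mulVec]
        exact congrFun this i
    simp only [Finset.mem_toList, Finset.mem_univ, if_true, Finset.prod_apply,
      Finset.prod_boole, Finsupp.single_apply, forall_const, h]
  · have hvec : (U⁻¹ *ᵥ fun j => ⌊t j⌋) = ∑ j, ⌊t j⌋ • edgeVector U j := by
      ext i
      simp [edgeVector, Matrix.mulVec, dotProduct, mul_comm]
    have hpair : latticePairing l (U⁻¹ *ᵥ fun j => ⌊t j⌋) =
        ∑ j, ⌊t j⌋ * latticePairing l (edgeVector U j) := by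
      rw [hvec]
      simp only [latticePairing, Finset.sum_apply, Pi.smul_apply, smul_eq_mul, Int.cast_sum,
        Int.cast_mul, Finset.mul_sum]
      rw [Finset.sum_comm]
      exact Finset.sum_congr rfl fun _ _ => Finset.sum_congr rfl fun _ _ => by ring
    rw [expSum, Finsupp.linearCombination_single, one_smul, hpair, expFactor, List.map_map,
      Finset.prod_map_toList]
    have : (∏ j, (1 - expSeries (-latticePairing l (edgeVector U j)))) * ∏ j, q j =
        PowerSeries.X ^ d := by
      rw [← Finset.prod_mul_distrib, Finset.prod_congr rfl fun j _ => hq j]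
      simp
    rw [← this]
    simp only [Function.comp_def]
    ring

end unimodular

/-! ### Decomposition of simplicial cones into unimodular cones -/

/-- The indicator function of the lattice points of the half-space `⟨r, x⟩ ≤ ⟨r, s⟩`. -/
noncomputable def halfSpaceAt {d : ℕ} (r : Fin d → ℤ) (s : Fin d → ℝ) : (Fin d → ℤ) → ℝ :=
  halfSpaceIndicator r (∑ k, (r k : ℝ) * s k)

/-- The indicator function of the lattice points of the cone `M x ≤ M s` with apex `s`. -/
noncomputable def coneAt {d : ℕ} (M : Matrix (Fin d) (Fin d) ℤ) (s : Fin d → ℝ) :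
    (Fin d → ℤ) → ℝ :=
  coneIndicator M fun i => ∑ k, (M.row i k : ℝ) * s k

section decomposition

open scoped Matrix

variable {d : ℕ}

theorem coneAt_eq_prod (M : Matrix (Fin d) (Fin d) ℤ) (s : Fin d → ℝ) :
    coneAt M s = ∏ i, halfSpaceAt (M.row i) s := rfl

theorem halfSpaceIndicator_add {r v : Fin d → ℤ} (h : r ⬝ᵥ v = 0) (t : ℝ) (x : Fin d → ℤ) :
    halfSpaceIndicator r t (x + v) = halfSpaceIndicator r t x := by
  simp [halfSpaceIndicator, dotProduct_add, h]

theorem halfSpaceAt_eq_zero_or_one (r : Fin d → ℤ) (s : Fin d → ℝ) (x : Fin d → ℤ) :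
    halfSpaceAt r s x = 0 ∨ halfSpaceAt r s x = 1 := by
  rw [halfSpaceAt, halfSpaceIndicator]
  split_ifs <;> simp

theorem halfSpaceAt_eq_one_iff {r : Fin d → ℤ} {s : Fin d → ℝ} {x : Fin d → ℤ} :
    halfSpaceAt r s x = 1 ↔ ∑ k, (r k : ℝ) * (x k - s k) ≤ 0 := by
  rw [halfSpaceAt, halfSpaceIndicator, ite_eq_left_iff]
  simp [dotProduct, mul_sub]

/-- A nonunimodular simplicial cone contains a lattice vector with small coefficients. -/
theorem exists_row_of_not_isUnit_det {M : Matrix (Fin d) (Fin d) ℤ} (hM : M.det ≠ 0)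
    (hu : ¬IsUnit M.det) :
    ∃ l r : Fin d → ℤ, (∀ i, 0 ≤ r i ∧ r i < |M.det|) ∧ (∃ i, 0 < r i) ∧
      |M.det| • l = r ᵥ* M := by
  rw [← Matrix.isUnit_iff_isUnit_det, ← Matrix.vecMul_surjective_iff_isUnit] at hu
  simp only [Function.Surjective, not_forall, not_exists] at hu
  obtain ⟨y, hy⟩ := hu
  obtain ⟨p, hp⟩ : ∃ p : Fin d → ℤ, |M.det| • y = p ᵥ* M := by
    have h := Matrix.mulVec_cramer Mᵀ y
    rw [Matrix.mulVec_transpose, Matrix.det_transpose] at h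
    rcases abs_choice M.det with h' | h' <;> rw [h']
    · exact ⟨_, h.symm⟩
    · exact ⟨-(Mᵀ.cramer y), by rw [Matrix.neg_vecMul, h, neg_smul]⟩
  have hpos : 0 < |M.det| := abs_pos.mpr hM
  have hl : |M.det| • (y - (fun i => p i / |M.det|) ᵥ* M) = (fun i => p i % |M.det|) ᵥ* M := by
    rw [smul_sub, hp, ← Matrix.smul_vecMul, ← Matrix.sub_vecMul]
    congr 1
    ext i
    have := Int.emod_add_mul_ediv (p i) |M.det|
    simp only [Pi.sub_apply, Pi.smul_apply, smul_eq_mul]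
    linarith
  refine ⟨_, _, fun i => ⟨Int.emod_nonneg _ hpos.ne', Int.emod_lt_of_pos _ hpos⟩, ?_, hl⟩
  by_contra! h
  have h0 : (fun i => p i % |M.det|) = 0 :=
    funext fun i => le_antisymm (h i) (Int.emod_nonneg _ hpos.ne')
  rw [h0, Matrix.zero_vecMul, smul_eq_zero_iff_right hpos.ne', sub_eq_zero] at hl
  exact hy _ hl.symm

theorem abs_det_mul_det_updateRow {M : Matrix (Fin d) (Fin d) ℤ} {l r : Fin d → ℤ}
    (h : |M.det| • l = r ᵥ* M) (i : Fin d) :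
    |M.det| * (M.updateRow i l).det = r i * M.det := by
  rw [← Matrix.det_updateRow_smul, h, Matrix.vecMul_eq_sum, Matrix.det_updateRow_sum, smul_eq_mul]

theorem exists_ne_zero_forall_row_dotProduct_eq_zero (M : Matrix (Fin d) (Fin d) ℤ) (i : Fin d) :
    ∃ v : Fin d → ℤ, v ≠ 0 ∧ ∀ j ≠ i, M.row j ⬝ᵥ v = 0 := by
  obtain ⟨v, hv, h⟩ := Matrix.exists_mulVec_eq_zero_iff.mpr
    (Matrix.det_eq_zero_of_row_eq_zero (A := M.updateRow i 0) i (by simp))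
  refine ⟨v, hv, fun j hj => ?_⟩
  have := congrFun h j
  rw [Matrix.mulVec, Matrix.updateRow_ne hj] at this
  exact this

theorem row_updateRow_self (M : Matrix (Fin d) (Fin d) ℤ) (i : Fin d) (l : Fin d → ℤ) :
    (M.updateRow i l).row i = l := by
  ext k
  simp [Matrix.row_apply]

theorem row_updateRow_ne (M : Matrix (Fin d) (Fin d) ℤ) {i j : Fin d} (h : j ≠ i)
    (l : Fin d → ℤ) : (M.updateRow i l).row j = M.row j := by
  ext k
  simp [Matrix.row_apply, h]

/-- Inclusion-exclusion modulo products in which two factors are missing. -/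
theorem mul_prod_sub_one_mem {ι A : Type*} [DecidableEq ι] [CommRing A] [Module ℝ A]
    (S : Submodule ℝ A) (I : Finset ι) (hI : I.Nonempty) (a : A) (f : ι → A)
    (hS : ∀ t ⊆ I, ∀ i ∈ I, ∀ j ∈ I, i ∉ t → j ∉ t → i ≠ j → a * ∏ k ∈ t, f k ∈ S) :
    a * ∏ i ∈ I, (f i - 1) - (a * ∏ i ∈ I, f i - ∑ i ∈ I, a * ∏ j ∈ I.erase i, f j) ∈ S := by
  obtain ⟨n, hn⟩ := Nat.exists_eq_succ_of_ne_zero hI.card_pos.ne'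
  rw [Finset.prod_sub, Finset.sum_powerset, hn, Finset.sum_range_succ', Finset.sum_range_succ',
    Finset.powersetCard_zero, Finset.powersetCard_one]
  have h : ∀ x y z : A, x - (y - z) = x - y + z := fun x y z => by ring
  simp only [Finset.sum_singleton, Finset.card_empty, pow_zero, mul_one,
    Finset.sdiff_empty, Finset.prod_const_one, one_mul, Finset.sum_map,
    Function.Embedding.coeFn_mk, Finset.card_singleton, pow_one, neg_mul, Finset.sum_neg_distrib,
    mul_add, mul_neg, Finset.mul_sum, Finset.sdiff_singleton_eq_erase, h, add_sub_cancel_right,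
    neg_add_cancel_right]
  refine S.sum_mem fun k _ => S.sum_mem fun t ht => ?_
  rw [Finset.mem_powersetCard] at ht
  obtain ⟨i, hi, j, hj, hij⟩ := Finset.one_lt_card.mp (by omega : 1 < t.card)
  have := hS (I \ t) Finset.sdiff_subset i (ht.1 hi) j (ht.1 hj) (by simp [hi]) (by simp [hj]) hij
  rcases neg_one_pow_eq_or A t.card with h' | h' <;> rw [h']
  · simpa using this
  · simpa using this

/-- One step of the signed decomposition of a simplicial cone, modulo cones with lines. -/
theorem exists_coneAt_sub_sum_updateRow_mem (M : Matrix (Fin d) (Fin d) ℤ) (hM : M.det ≠ 0)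
    (l r : Fin d → ℤ) (hr : ∀ i, 0 ≤ r i) (hr' : ∃ i, 0 < r i) (h : |M.det| • l = r ᵥ* M) :
    ∃ V : Finset (Fin d → ℤ), (∀ v ∈ V, v ≠ 0) ∧ ∀ s : Fin d → ℝ,
      coneAt M s - ∑ i with 0 < r i, coneAt (M.updateRow i l) s ∈
        invariantSpan (V : Set (Fin d → ℤ)) := by
  classical
  have hv : ∀ i j : Fin d, ∃ v : Fin d → ℤ, v ≠ 0 ∧
      (i ≠ j → l ⬝ᵥ v = 0 ∧ ∀ k, k ≠ i → k ≠ j → M.row k ⬝ᵥ v = 0) := by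
    intro i j
    obtain ⟨v, hv, h⟩ := exists_ne_zero_forall_row_dotProduct_eq_zero (M.updateRow i l) j
    refine ⟨v, hv, fun hij => ⟨by simpa only [row_updateRow_self] using h i hij, fun k hki hkj => ?_⟩⟩
    have := h k hkj
    rwa [row_updateRow_ne M hki] at this
  choose v hv0 hv using hv
  refine ⟨Finset.univ.image fun p : Fin d × Fin d => v p.1 p.2, ?_, fun s => ?_⟩
  · intro w hw
    obtain ⟨p, -, rfl⟩ := Finset.mem_image.mp hw
    exact hv0 _ _
  set I : Finset (Fin d) := {i | 0 < r i} with hI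
  have hIn : I.Nonempty := by simpa [hI, Finset.Nonempty] using hr'
  set a : (Fin d → ℤ) → ℝ := halfSpaceAt l s * ∏ i ∈ Iᶜ, halfSpaceAt (M.row i) s with ha
  have hcomb : ∀ x : Fin d → ℤ, |M.det| * ∑ k, (l k : ℝ) * (x k - s k) =
      ∑ i ∈ I, r i * ∑ k, (M.row i k : ℝ) * (x k - s k) := by
    intro x
    have h1 : ∀ k, (|M.det| * l k : ℝ) = ∑ i ∈ I, (r i : ℝ) * M i k := by
      intro k
      have := congrFun h k
      simp only [Pi.smul_apply, smul_eq_mul, Matrix.vecMul, dotProduct] at this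
      rw [Finset.sum_subset (Finset.subset_univ I)]
      · exact_mod_cast congrArg (Int.cast (R := ℝ)) this
      · intro i _ hi
        rw [le_antisymm (not_lt.mp (by simpa [hI] using hi)) (hr i)]
        simp
    simp only [Finset.mul_sum, ← mul_assoc]
    rw [Finset.sum_comm]
    refine Finset.sum_congr rfl fun k _ => ?_
    rw [← Finset.sum_mul]
    congr 1
    exact_mod_cast h1 k
  have hpos : (0 : ℝ) < |M.det| := by simpa using hM
  have hzero : a * ∏ i ∈ I, (halfSpaceAt (M.row i) s - 1) = 0 := by
    ext x
    simp only [ha, Pi.mul_apply, Finset.prod_apply, Pi.sub_apply, Pi.one_apply, Pi.zero_apply]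
    by_cases hx : ∃ i ∈ I, halfSpaceAt (M.row i) s x = 1
    · obtain ⟨i, hi, hx⟩ := hx
      rw [Finset.prod_eq_zero hi (by rw [hx, sub_self]), mul_zero]
    · push Not at hx
      have : halfSpaceAt l s x = 0 := by
        refine (halfSpaceAt_eq_zero_or_one l s x).resolve_right fun h1 => ?_
        rw [halfSpaceAt_eq_one_iff] at h1
        refine (mul_nonpos_of_nonneg_of_nonpos hpos.le h1).not_gt ?_
        have hsum : 0 < ∑ i ∈ I, r i * ∑ k, (M.row i k : ℝ) * (x k - s k) := by
          refine Finset.sum_pos (fun i hi => mul_pos ?_ ?_) hIn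
          · exact_mod_cast (by simpa [hI] using hi : 0 < r i)
          · exact not_le.mp fun h2 => hx i hi (halfSpaceAt_eq_one_iff.mpr h2)
        exact hcomb x ▸ hsum
      rw [this, zero_mul, zero_mul]
  have hone : coneAt M s = a * ∏ i ∈ I, halfSpaceAt (M.row i) s := by
    ext x
    rw [coneAt_eq_prod, ← Finset.prod_compl_mul_prod I]
    simp only [ha, Pi.mul_apply, Finset.prod_apply]
    by_cases hx : ∀ i ∈ I, halfSpaceAt (M.row i) s x = 1
    · have : halfSpaceAt l s x = 1 := by
        rw [halfSpaceAt_eq_one_iff]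
        refine nonpos_of_mul_nonpos_right ?_ hpos
        rw [hcomb x]
        refine Finset.sum_nonpos fun i hi => mul_nonpos_of_nonneg_of_nonpos ?_ ?_
        · exact_mod_cast hr i
        · exact halfSpaceAt_eq_one_iff.mp (hx i hi)
      rw [this, one_mul]
    · push Not at hx
      obtain ⟨i, hi, hx⟩ := hx
      have := (halfSpaceAt_eq_zero_or_one (M.row i) s x).resolve_right hx
      rw [Finset.prod_eq_zero hi this, mul_zero, mul_zero]
  have hupd : ∀ i ∈ I, coneAt (M.updateRow i l) s =
      a * ∏ j ∈ I.erase i, halfSpaceAt (M.row j) s := by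
    intro i hi
    rw [coneAt_eq_prod, ← Finset.mul_prod_erase _ _ (Finset.mem_univ i), ha, mul_assoc,
      row_updateRow_self,
      ← Finset.prod_union (Finset.disjoint_left.mpr fun j hj hj' =>
        Finset.mem_compl.mp hj (Finset.mem_of_mem_erase hj'))]
    congr 1
    refine Finset.prod_congr ?_ fun j hj => ?_
    · ext j
      simp only [Finset.mem_erase, Finset.mem_union, Finset.mem_compl, Finset.mem_univ]
      by_cases hj : j = i
      · simp [hj, hi]
      · tauto
    · rw [row_updateRow_ne]
      rcases Finset.mem_union.mp hj with hj' | hj'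
      · rintro rfl
        exact Finset.mem_compl.mp hj' hi
      · exact Finset.ne_of_mem_erase hj'
  have key := mul_prod_sub_one_mem
    (invariantSpan ((Finset.univ.image fun p : Fin d × Fin d => v p.1 p.2 : Finset _) :
      Set (Fin d → ℤ))) I hIn a (fun i => halfSpaceAt (M.row i) s) ?_
  · rw [hzero, zero_sub, neg_mem_iff, ← hone, Finset.sum_congr rfl fun i hi => (hupd i hi).symm]
      at key
    exact key
  · intro t ht i hi j hj hit hjt hij
    refine Submodule.subset_span ⟨v i j, by simp, fun x => ?_⟩
    have hM' : ∀ k, k ≠ i → k ≠ j →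
        halfSpaceAt (M.row k) s (x + v i j) = halfSpaceAt (M.row k) s x :=
      fun k hki hkj => halfSpaceIndicator_add ((hv i j hij).2 k hki hkj) _ _
    simp only [ha, Pi.mul_apply, Finset.prod_apply]
    congr 1
    · congr 1
      · exact halfSpaceIndicator_add (hv i j hij).1 _ _
      · refine Finset.prod_congr rfl fun k hk => hM' k ?_ ?_
        · rintro rfl
          exact Finset.mem_compl.mp hk hi
        · rintro rfl
          exact Finset.mem_compl.mp hk hj
    · refine Finset.prod_congr rfl fun k hk => hM' k ?_ ?_
      · rintro rfl
        exact hit hk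
      · rintro rfl
        exact hjt hk

/-- Modulo cones with lines, a simplicial cone is a finite sum of unimodular cones. -/
theorem exists_unimodular_decomposition (M : Matrix (Fin d) (Fin d) ℤ) (hM : M.det ≠ 0) :
    ∃ (Us : List (Matrix (Fin d) (Fin d) ℤ)) (V : Finset (Fin d → ℤ)),
      (∀ U ∈ Us, IsUnit U.det) ∧ (∀ v ∈ V, v ≠ 0) ∧ ∀ s : Fin d → ℝ,
        coneAt M s - (Us.map fun U => coneAt U s).sum ∈ invariantSpan (V : Set (Fin d → ℤ)) := by
  classical
  induction hn : M.det.natAbs using Nat.strong_induction_on generalizing M with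
  | _ n ih =>
    by_cases hu : IsUnit M.det
    · exact ⟨[M], ∅, by simpa using hu, by simp, by simp⟩
    obtain ⟨l, r, hr, hr', h⟩ := exists_row_of_not_isUnit_det hM hu
    obtain ⟨V, hV, hstep⟩ :=
      exists_coneAt_sub_sum_updateRow_mem M hM l r (fun i => (hr i).1) hr' h
    have hrec : ∀ i, ∃ (Us : List (Matrix (Fin d) (Fin d) ℤ)) (V : Finset (Fin d → ℤ)),
        (∀ U ∈ Us, IsUnit U.det) ∧ (∀ v ∈ V, v ≠ 0) ∧ (0 < r i → ∀ s : Fin d → ℝ,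
          coneAt (M.updateRow i l) s - (Us.map fun U => coneAt U s).sum ∈
            invariantSpan (V : Set (Fin d → ℤ))) := by
      intro i
      by_cases hi : 0 < r i
      · have hdet := abs_det_mul_det_updateRow h i
        have habs := congrArg abs hdet
        rw [abs_mul, abs_mul, abs_abs, abs_of_pos hi, mul_comm,
          mul_right_cancel_iff_of_pos (abs_pos.mpr hM)] at habs
        obtain ⟨Us, V, h1, h2, h3⟩ := ih (M.updateRow i l).det.natAbs
          (by rw [← hn, ← Nat.cast_lt (α := ℤ), Int.natCast_natAbs, Int.natCast_natAbs]; exact habs ▸ (hr i).2)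
          (M.updateRow i l) (abs_pos.mp (habs ▸ hi)) rfl
        exact ⟨Us, V, h1, h2, fun _ => h3⟩
      · exact ⟨[], ∅, by simp, by simp, fun h => absurd h hi⟩
    choose Us V' hUs hV' hrec using hrec
    refine ⟨(Finset.univ.filter fun i => 0 < r i).toList.flatMap Us,
      V ∪ Finset.univ.biUnion V', ?_, ?_, fun s => ?_⟩
    · intro U hU
      obtain ⟨i, -, hU⟩ := List.mem_flatMap.mp hU
      exact hUs i U hU
    · intro v hv
      rcases Finset.mem_union.mp hv with hv | hv
      · exact hV v hv
      · obtain ⟨i, -, hv⟩ := Finset.mem_biUnion.mp hv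
        exact hV' i v hv
    · have hsum : (((Finset.univ.filter fun i => 0 < r i).toList.flatMap Us).map
          fun U => coneAt U s).sum =
          ∑ i with 0 < r i, ((Us i).map fun U => coneAt U s).sum := by
        rw [List.map_flatMap, List.flatMap, List.sum_flatten, List.map_map, Finset.sum_map_toList]
        rfl
      rw [hsum, ← sub_add_sub_cancel _ (∑ i with 0 < r i, coneAt (M.updateRow i l) s),
        ← Finset.sum_sub_distrib]
      refine Submodule.add_mem _ (invariantSpan_mono (by simp) (hstep s))
        (Submodule.sum_mem _ fun i hi => invariantSpan_mono ?_
          (hrec i (Finset.mem_filter.mp hi).2 s))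
      intro v hv
      rw [Finset.mem_coe, Finset.mem_union, Finset.mem_biUnion]
      exact Or.inr ⟨i, Finset.mem_univ i, hv⟩

/-- Changing the half-space indicators by constants changes their product by cones with lines. -/
theorem exists_prod_halfSpaceIndicator_add_sub_mem (M : Matrix (Fin d) (Fin d) ℤ) :
    ∃ V : Finset (Fin d → ℤ), (∀ v ∈ V, v ≠ 0) ∧ ∀ (t a : Fin d → ℝ),
      (fun x => ∏ i, (halfSpaceIndicator (M.row i) (t i) x + a i)) - coneIndicator M t ∈
        invariantSpan (V : Set (Fin d → ℤ)) := by
  classical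
  choose v hv0 hv using fun i => exists_ne_zero_forall_row_dotProduct_eq_zero M i
  refine ⟨Finset.univ.image v, by simp [hv0], fun t a => ?_⟩
  have h : (fun x => ∏ i, (halfSpaceIndicator (M.row i) (t i) x + a i)) - coneIndicator M t =
      ∑ T ∈ (Finset.univ : Finset (Fin d)).powerset.erase Finset.univ, fun x =>
        (∏ i ∈ T, halfSpaceIndicator (M.row i) (t i) x) * ∏ i ∈ Finset.univ \ T, a i := by
    ext x
    rw [Pi.sub_apply, Finset.prod_add, Finset.sum_apply,
      ← Finset.add_sum_erase _ _ (Finset.mem_powerset_self _), coneIndicator, Finset.prod_apply]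
    simp
  rw [h]
  refine Submodule.sum_mem _ fun T hT => ?_
  obtain ⟨i, hi⟩ : ∃ i, i ∉ T := by
    by_contra! h
    exact Finset.ne_of_mem_erase hT (Finset.eq_univ_of_forall h)
  refine Submodule.subset_span ⟨v i, by simp, fun x => ?_⟩
  refine congrArg (· * _) (Finset.prod_congr rfl fun j hj => ?_)
  refine halfSpaceIndicator_add (hv i j ?_) _ _
  rintro rfl
  exact hi hj

end decomposition

/-! ### Polarized decomposition of the polytope -/

/-- A family `𝓕` of index sets of dual bases, closed under pivoting: `w B` is the basis dual to
`(μ j)_{j ∈ B}`, and along every edge direction there is exactly one opposite edge. -/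
structure IsPivotSystem {ι V : Type*} [DecidableEq ι] [AddCommGroup V] [Module ℝ V]
    (μ : ι → Module.Dual ℝ V) (𝓕 : Finset (Finset ι)) (w : Finset ι → ι → V) : Prop where
  dual : ∀ B ∈ 𝓕, ∀ i ∈ B, ∀ j ∈ B, μ i (w B j) = if i = j then 1 else 0
  exists_pivot : ∀ B ∈ 𝓕, ∀ i ∈ B, ∃ B' ∈ 𝓕, ∃ k ∈ B', B' ≠ B ∧ B'.erase k = B.erase i
  opposite : ∀ B ∈ 𝓕, ∀ i ∈ B, ∀ B' ∈ 𝓕, ∀ k ∈ B', B' ≠ B → B'.erase k = B.erase i →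
    ∃ r : ℝ, 0 < r ∧ w B' k = -r • w B i
  congr : ∀ B ∈ 𝓕, ∀ i ∈ B, ∀ B' ∈ 𝓕, ∀ k ∈ B', B' ≠ B → B'.erase k = B.erase i →
    ∀ j ∈ B.erase i, ∃ c : ℝ, w B' j = w B j + c • w B i

/-- The sum over `𝓕` of the products of `θ j - n j`, where `θ j` records whether `ξ` is positive
on the edge direction `w B j`. -/
noncomputable def polarSum {ι V : Type*} [AddCommGroup V] [Module ℝ V]
    (𝓕 : Finset (Finset ι)) (w : Finset ι → ι → V) (n : ι → ℝ) (ξ : Module.Dual ℝ V) : ℝ :=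
  ∑ B ∈ 𝓕, ∏ j ∈ B, ((if 0 < ξ (w B j) then 1 else 0) - n j)

section pivot

open Filter Topology

variable {ι V : Type*} [DecidableEq ι] [AddCommGroup V] [Module ℝ V]
  {μ : ι → Module.Dual ℝ V} {𝓕 : Finset (Finset ι)} {w : Finset ι → ι → V}

theorem IsPivotSystem.ne_zero (h : IsPivotSystem μ 𝓕 w) {B : Finset ι} (hB : B ∈ 𝓕) {i : ι}
    (hi : i ∈ B) : w B i ≠ 0 := by
  intro h0
  simpa [h0] using h.dual B hB i hi i hi

/-- Summing over all edges a quantity that is opposite on opposite edges gives zero. -/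
theorem IsPivotSystem.sum_eq_zero (h : IsPivotSystem μ 𝓕 w) (F : Finset ι → ι → ℝ)
    (hF : ∀ B ∈ 𝓕, ∀ i ∈ B, ∀ B' ∈ 𝓕, ∀ k ∈ B', B' ≠ B → B'.erase k = B.erase i →
      F B i + F B' k = 0) :
    ∑ B ∈ 𝓕, ∑ i ∈ B, F B i = 0 := by
  have hex : ∀ p : (_ : Finset ι) × ι, p ∈ 𝓕.sigma (fun B => B) →
      ∃ q : (_ : Finset ι) × ι, q ∈ 𝓕.sigma (fun B => B) ∧ q.1 ≠ p.1 ∧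
        q.1.erase q.2 = p.1.erase p.2 := by
    intro p hp
    rw [Finset.mem_sigma] at hp
    obtain ⟨B', hB', k, hk, hne, he⟩ := h.exists_pivot p.1 hp.1 p.2 hp.2
    exact ⟨⟨B', k⟩, Finset.mem_sigma.mpr ⟨hB', hk⟩, hne, he⟩
  choose σ hσ hσne hσe using hex
  rw [Finset.sum_sigma']
  refine Finset.sum_involution σ (fun p hp => ?_) (fun p hp _ hpp => hσne p hp (by rw [hpp])) hσ
    fun p hp => ?_
  · have hp' := Finset.mem_sigma.mp hp
    have hq' := Finset.mem_sigma.mp (hσ p hp)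
    exact hF _ hp'.1 _ hp'.2 _ hq'.1 _ hq'.2 (hσne p hp) (hσe p hp)
  · have hp' := Finset.mem_sigma.mp hp
    have hq' := Finset.mem_sigma.mp (hσ p hp)
    have hq'' := Finset.mem_sigma.mp (hσ _ (hσ p hp))
    have he := (hσe _ (hσ p hp)).trans (hσe p hp)
    have hBB : (σ (σ p hp) (hσ p hp)).1 = p.1 := by
      by_contra hne
      obtain ⟨r, hr, h1⟩ := h.opposite _ hp'.1 _ hp'.2 _ hq'.1 _ hq'.2 (hσne p hp) (hσe p hp)
      obtain ⟨r', hr', h2⟩ := h.opposite _ hq'.1 _ hq'.2 _ hq''.1 _ hq''.2 (hσne _ (hσ p hp))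
        (hσe _ (hσ p hp))
      obtain ⟨r'', hr'', h3⟩ := h.opposite _ hp'.1 _ hp'.2 _ hq''.1 _ hq''.2 hne he
      rw [h1, h3, smul_smul] at h2
      have := smul_left_injective ℝ (h.ne_zero hp'.1 hp'.2) h2
      nlinarith [mul_pos hr hr']
    refine Sigma.ext hBB (heq_of_eq ?_)
    rw [hBB] at he
    by_contra hne
    have h1 : (σ (σ p hp) (hσ p hp)).2 ∈ p.1.erase p.2 :=
      Finset.mem_erase.mpr ⟨hne, hBB ▸ hq''.2⟩
    rw [← he] at h1
    exact Finset.notMem_erase _ _ h1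

/-- A crossing-free path between two generic linear forms leaves the polar sum unchanged. -/
theorem IsPivotSystem.polarSum_eq_of_cross (h : IsPivotSystem μ 𝓕 w) (n : ι → ℝ)
    {ξ₀ ξ₁ : Module.Dual ℝ V} (h₀ : ∀ B ∈ 𝓕, ∀ i ∈ B, ξ₀ (w B i) ≠ 0)
    (h₁ : ∀ B ∈ 𝓕, ∀ i ∈ B, ξ₁ (w B i) ≠ 0)
    (hc : ∀ B ∈ 𝓕, ∀ i ∈ B, ∀ j ∈ B, i ≠ j →
      ξ₀ (w B i) * ξ₁ (w B j) ≠ ξ₀ (w B j) * ξ₁ (w B i)) :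
    polarSum 𝓕 w n ξ₀ = polarSum 𝓕 w n ξ₁ := by
  set ζ := ξ₁ - ξ₀ with hζ
  set f : Finset ι → ι → ℝ → ℝ := fun B i s => ξ₀ (w B i) + s * ζ (w B i) with hf
  have hcont : ∀ B i, Continuous (f B i) := fun B i => by fun_prop
  have hslope : ∀ B ∈ 𝓕, ∀ i ∈ B, ∀ s, f B i s = 0 → ζ (w B i) ≠ 0 := by
    intro B hB i hi s hs h0
    simp only [hf, h0, mul_zero, add_zero] at hs
    exact h₀ B hB i hi hs
  have huniq : ∀ B ∈ 𝓕, ∀ i ∈ B, ∀ j ∈ B, ∀ s, f B i s = 0 → f B j s = 0 → i = j := by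
    intro B hB i hi j hj s hs hs'
    by_contra hij
    refine hc B hB i hi j hj hij ?_
    have e1 : ξ₁ (w B i) = ξ₀ (w B i) + ζ (w B i) := by simp [hζ]
    have e2 : ξ₁ (w B j) = ξ₀ (w B j) + ζ (w B j) := by simp [hζ]
    simp only [hf] at hs hs'
    rw [e1, e2]
    linear_combination ζ (w B j) * hs - ζ (w B i) * hs'
  classical
  -- the limits of the sign of `f B i` from the right and from the left
  set θr : Finset ι → ι → ℝ → ℝ := fun B i s =>
    if 0 < f B i s ∨ (f B i s = 0 ∧ 0 < ζ (w B i)) then 1 else 0 with hθr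
  set θl : Finset ι → ι → ℝ → ℝ := fun B i s =>
    if 0 < f B i s ∨ (f B i s = 0 ∧ ζ (w B i) < 0) then 1 else 0 with hθl
  have hright : ∀ B ∈ 𝓕, ∀ i ∈ B, ∀ s, ∀ᶠ s' in 𝓝[>] s, θr B i s' = θr B i s := by
    intro B hB i hi s
    rcases lt_trichotomy (f B i s) 0 with hs | hs | hs
    · filter_upwards [((hcont B i).tendsto s).eventually_lt_const hs |>.filter_mono
        nhdsWithin_le_nhds] with s' hs'
      simp [hθr, hs.not_gt, hs.ne, hs'.not_gt, hs'.ne]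
    · have hsl := hslope B hB i hi s hs
      filter_upwards [self_mem_nhdsWithin] with s' hs'
      have hs'' : f B i s' = (s' - s) * ζ (w B i) := by
        simp only [hf] at hs ⊢
        linear_combination hs
      have hpos : 0 < s' - s := sub_pos.mpr hs'
      simp [hθr, hs, hs'', hpos, hpos.ne', hsl]
    · filter_upwards [((hcont B i).tendsto s).eventually_const_lt hs |>.filter_mono
        nhdsWithin_le_nhds] with s' hs'
      simp [hθr, hs, hs']
  have hleft : ∀ B ∈ 𝓕, ∀ i ∈ B, ∀ s, ∀ᶠ s' in 𝓝[<] s, θr B i s' = θl B i s := by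
    intro B hB i hi s
    rcases lt_trichotomy (f B i s) 0 with hs | hs | hs
    · filter_upwards [((hcont B i).tendsto s).eventually_lt_const hs |>.filter_mono
        nhdsWithin_le_nhds] with s' hs'
      simp [hθr, hθl, hs.not_gt, hs.ne, hs'.not_gt, hs'.ne]
    · have hsl := hslope B hB i hi s hs
      filter_upwards [self_mem_nhdsWithin] with s' hs'
      have hs'' : f B i s' = (s - s') * -ζ (w B i) := by
        simp only [hf] at hs ⊢
        linear_combination hs
      have hpos : 0 < s - s' := sub_pos.mpr hs'
      have hiff : (s - s') * ζ (w B i) < 0 ↔ ζ (w B i) < 0 := by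
        rw [← neg_pos, ← mul_neg, mul_pos_iff_of_pos_left hpos, neg_pos]
      simp [hθr, hθl, hs, hs'', hpos.ne', hsl, hiff]
    · filter_upwards [((hcont B i).tendsto s).eventually_const_lt hs |>.filter_mono
        nhdsWithin_le_nhds] with s' hs'
      simp [hθr, hθl, hs, hs']
  have hjump : ∀ s, ∑ B ∈ 𝓕, ∏ j ∈ B, (θr B j s - n j) = ∑ B ∈ 𝓕, ∏ j ∈ B, (θl B j s - n j) := by
    intro s
    have hsame : ∀ B i, f B i s ≠ 0 → θr B i s = (if 0 < f B i s then 1 else 0) ∧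
        θl B i s = (if 0 < f B i s then 1 else 0) := by
      intro B i hs
      simp [hθr, hθl, hs]
    rw [← sub_eq_zero, ← Finset.sum_sub_distrib]
    have hB : ∀ B ∈ 𝓕, ∏ j ∈ B, (θr B j s - n j) - ∏ j ∈ B, (θl B j s - n j) =
        ∑ i ∈ B, (θr B i s - θl B i s) *
          ∏ j ∈ B.erase i, ((if 0 < f B j s then 1 else 0) - n j) := by
      intro B hB
      by_cases hcrit : ∃ i ∈ B, f B i s = 0
      · obtain ⟨i, hi, hs⟩ := hcrit
        have hne : ∀ j ∈ B.erase i, f B j s ≠ 0 := fun j hj hj0 =>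
          Finset.ne_of_mem_erase hj (huniq B hB j (Finset.mem_of_mem_erase hj) i hi s hj0 hs)
        have er : ∏ j ∈ B.erase i, (θr B j s - n j) =
            ∏ j ∈ B.erase i, ((if 0 < f B j s then 1 else 0) - n j) :=
          Finset.prod_congr rfl fun j hj => by rw [(hsame B j (hne j hj)).1]
        have el : ∏ j ∈ B.erase i, (θl B j s - n j) =
            ∏ j ∈ B.erase i, ((if 0 < f B j s then 1 else 0) - n j) :=
          Finset.prod_congr rfl fun j hj => by rw [(hsame B j (hne j hj)).2]
        rw [Finset.sum_eq_single_of_mem i hi, ← Finset.mul_prod_erase B _ hi,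
          ← Finset.mul_prod_erase B _ hi, er, el]
        · ring
        · intro j hj hji
          have := hsame B j (hne j (Finset.mem_erase.mpr ⟨hji, hj⟩))
          rw [this.1, this.2, sub_self, zero_mul]
      · push Not at hcrit
        rw [Finset.sum_eq_zero fun i hi => by
            rw [(hsame B i (hcrit i hi)).1, (hsame B i (hcrit i hi)).2, sub_self, zero_mul],
          sub_eq_zero]
        exact Finset.prod_congr rfl fun i hi => by
          rw [(hsame B i (hcrit i hi)).1, (hsame B i (hcrit i hi)).2]
    rw [Finset.sum_congr rfl hB]
    refine h.sum_eq_zero _ fun B hB i hi B' hB' k hk hne he => ?_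
    obtain ⟨r, hr, hw⟩ := h.opposite B hB i hi B' hB' k hk hne he
    have hfk : f B' k s = -r * f B i s := by
      simp only [hf, hw, map_smul, smul_eq_mul]
      ring
    by_cases hs : f B i s = 0
    · have hsl := hslope B hB i hi s hs
      have hζk : ζ (w B' k) = -r * ζ (w B i) := by rw [hw, map_smul, smul_eq_mul]
      have hprod : ∏ j ∈ B'.erase k, (((if 0 < f B' j s then 1 else 0) : ℝ) - n j) =
          ∏ j ∈ B.erase i, ((if 0 < f B j s then 1 else 0) - n j) := by
        rw [he]
        refine Finset.prod_congr rfl fun j hj => ?_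
        obtain ⟨c, hcj⟩ := h.congr B hB i hi B' hB' k hk hne he j hj
        have : f B' j s = f B j s := by
          simp only [hf, hcj, map_add, map_smul, smul_eq_mul] at hs ⊢
          linear_combination c * hs
        rw [this]
      rw [hprod, ← add_mul]
      refine mul_eq_zero_of_left ?_ _
      rcases lt_or_gt_of_ne hsl with h' | h'
      · have : 0 < ζ (w B' k) := by rw [hζk]; nlinarith
        simp [hθr, hθl, hfk, hs, h', h'.not_gt, this, this.not_gt]
      · have : ζ (w B' k) < 0 := by rw [hζk]; nlinarith
        simp [hθr, hθl, hfk, hs, h', h'.not_gt, this, this.not_gt]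
    · have hs' : f B' k s ≠ 0 := by
        rw [hfk]
        exact mul_ne_zero (neg_ne_zero.mpr hr.ne') hs
      rw [(hsame B i hs).1, (hsame B i hs).2, (hsame B' k hs').1, (hsame B' k hs').2]
      ring
  have hloc : IsLocallyConstant fun s => ∑ B ∈ 𝓕, ∏ j ∈ B, (θr B j s - n j) := by
    rw [IsLocallyConstant.iff_eventually_eq]
    intro s
    rw [← nhdsNE_sup_pure s, ← nhdsLT_sup_nhdsGT]
    simp only [eventually_sup, eventually_pure, and_true]
    constructor
    · have : ∀ᶠ s' in 𝓝[<] s, ∀ B ∈ 𝓕, ∀ i ∈ B, θr B i s' = θl B i s := by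
        simp only [eventually_all_finset]
        exact fun B hB i hi => hleft B hB i hi s
      filter_upwards [this] with s' hs'
      rw [hjump s]
      exact Finset.sum_congr rfl fun B hB => Finset.prod_congr rfl fun i hi => by
        rw [hs' B hB i hi]
    · have : ∀ᶠ s' in 𝓝[>] s, ∀ B ∈ 𝓕, ∀ i ∈ B, θr B i s' = θr B i s := by
        simp only [eventually_all_finset]
        exact fun B hB i hi => hright B hB i hi s
      filter_upwards [this] with s' hs'
      exact Finset.sum_congr rfl fun B hB => Finset.prod_congr rfl fun i hi => by
        rw [hs' B hB i hi]
  have hend := hloc.apply_eq_of_preconnectedSpace 0 1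
  have e0 : ∀ B i, f B i 0 = ξ₀ (w B i) := fun B i => by simp [hf]
  have e1 : ∀ B i, f B i 1 = ξ₁ (w B i) := fun B i => by simp [hf, hζ]
  unfold polarSum
  convert hend using 1
  · refine Finset.sum_congr rfl fun B hB => Finset.prod_congr rfl fun i hi => ?_
    simp [hθr, e0, h₀ B hB i hi]
  · refine Finset.sum_congr rfl fun B hB => Finset.prod_congr rfl fun i hi => ?_
    simp [hθr, e1, h₁ B hB i hi]

/-- A finite set of nonzero vectors and finitely many strict inequalities satisfied by a linear
form have a common linear form that does not vanish on the vectors. -/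
theorem exists_dual_forall_ne_zero_and_neg {S T : Set V} (hS : S.Finite) (hT : T.Finite)
    (hS₀ : ∀ v ∈ S, v ≠ 0) (ζ : Module.Dual ℝ V) (hζ : ∀ u ∈ T, ζ u < 0) :
    ∃ ξ : Module.Dual ℝ V, (∀ v ∈ S, ξ v ≠ 0) ∧ ∀ u ∈ T, ξ u < 0 := by
  have := hS.to_subtype
  obtain ⟨ρ, hρ⟩ := Module.exists_dual_forall_apply_ne_zero (K := ℝ) (fun v : S => v.1)
    fun v => hS₀ v v.2
  have hcont : ∀ x : V, Continuous fun ε : ℝ => (ζ + ε • ρ) x := fun x => by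
    simp only [LinearMap.add_apply, LinearMap.smul_apply]
    fun_prop
  have h1 : ∀ᶠ ε in 𝓝[>] (0 : ℝ), ∀ v ∈ S, (ζ + ε • ρ) v ≠ 0 := by
    rw [eventually_all_finite hS]
    intro v hv
    by_cases hv₀ : ζ v = 0
    · filter_upwards [self_mem_nhdsWithin] with ε hε
      simpa [hv₀] using ⟨(ne_of_gt hε : ε ≠ 0), hρ ⟨v, hv⟩⟩
    · exact (((hcont v).tendsto 0).eventually_ne (by simpa using hv₀)).filter_mono
        nhdsWithin_le_nhds
  have h2 : ∀ᶠ ε in 𝓝[>] (0 : ℝ), ∀ u ∈ T, (ζ + ε • ρ) u < 0 := by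
    rw [eventually_all_finite hT]
    intro u hu
    exact (((hcont u).tendsto 0).eventually_lt_const (by simpa using hζ u hu)).filter_mono
      nhdsWithin_le_nhds
  obtain ⟨ε, h1, h2⟩ := (h1.and h2).exists
  exact ⟨_, h1, h2⟩

/-- The polar sum does not depend on the generic linear form. -/
theorem IsPivotSystem.polarSum_eq [Finite ι] (h : IsPivotSystem μ 𝓕 w) (n : ι → ℝ)
    {ξ₀ ξ₁ : Module.Dual ℝ V} (h₀ : ∀ B ∈ 𝓕, ∀ i ∈ B, ξ₀ (w B i) ≠ 0)
    (h₁ : ∀ B ∈ 𝓕, ∀ i ∈ B, ξ₁ (w B i) ≠ 0) :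
    polarSum 𝓕 w n ξ₀ = polarSum 𝓕 w n ξ₁ := by
  have hcross : ∀ ξ : Module.Dual ℝ V, (∀ B ∈ 𝓕, ∀ i ∈ B, ξ (w B i) ≠ 0) →
      ∀ B ∈ 𝓕, ∀ i ∈ B, ∀ j ∈ B, i ≠ j → ξ (w B i) • w B j - ξ (w B j) • w B i ≠ 0 := by
    intro ξ hξ B hB i hi j hj hij h0
    have := congrArg (μ j) h0
    simp only [map_sub, map_smul, smul_eq_mul, h.dual B hB j hj j hj, h.dual B hB j hj i hi,
      if_neg hij.symm, if_true, mul_one, mul_zero, sub_zero, map_zero] at this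
    exact hξ B hB i hi this
  let cross : Module.Dual ℝ V → Finset ι × ι × ι → V := fun ξ p =>
    ξ (w p.1 p.2.1) • w p.1 p.2.2 - ξ (w p.1 p.2.2) • w p.1 p.2.1
  obtain ⟨ξ, hξ, -⟩ := exists_dual_forall_ne_zero_and_neg
    (S := (Set.range (fun p : Finset ι × ι => w p.1 p.2) ∪ Set.range (cross ξ₀) ∪
      Set.range (cross ξ₁)) \ {0}) (T := ∅)
    (Set.Finite.sdiff (((Set.finite_range _).union (Set.finite_range _)).union
      (Set.finite_range _))) Set.finite_empty (fun v hv => hv.2) 0 (by simp)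
  have hw : ∀ B ∈ 𝓕, ∀ i ∈ B, ξ (w B i) ≠ 0 := fun B hB i hi =>
    hξ _ ⟨Or.inl (Or.inl ⟨(B, i), rfl⟩), h.ne_zero hB hi⟩
  have hne : ∀ ξ' : Module.Dual ℝ V, ∀ B i j, ξ (cross ξ' (B, i, j)) ≠ 0 →
      ξ' (w B i) * ξ (w B j) ≠ ξ' (w B j) * ξ (w B i) := by
    intro ξ' B i j h' he
    simp only [cross, map_sub, map_smul, smul_eq_mul, he, sub_self, ne_eq, not_true] at h'
  rw [h.polarSum_eq_of_cross n h₀ hw fun B hB i hi j hj hij => hne ξ₀ B i j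
      (hξ _ ⟨Or.inl (Or.inr ⟨_, rfl⟩), hcross ξ₀ h₀ B hB i hi j hj hij⟩),
    h.polarSum_eq_of_cross n h₁ hw fun B hB i hi j hj hij => hne ξ₁ B i j
      (hξ _ ⟨Or.inr ⟨_, rfl⟩, hcross ξ₁ h₁ B hB i hi j hj hij⟩)]

end pivot

/-- The index sets `𝓕` of the vertices of a simple polytope `μ k x ≤ b₀ k`, with edge directions
`w B j`. -/
structure IsSimpleVertexSystem {ι V : Type*} [DecidableEq ι] [AddCommGroup V] [Module ℝ V]
    (μ : ι → Module.Dual ℝ V) (b₀ : ι → ℝ) (𝓕 : Finset (Finset ι)) (w : Finset ι → ι → V) :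
    Prop where
  nonempty : 𝓕.Nonempty
  exists_neg : ∀ v : V, v ≠ 0 → ∃ k, μ k v < 0
  dual : ∀ B ∈ 𝓕, ∀ i ∈ B, ∀ j ∈ B, μ i (w B j) = if i = j then 1 else 0
  separating : ∀ B ∈ 𝓕, ∀ x, (∀ j ∈ B, μ j x = 0) → x = 0
  lt : ∀ B ∈ 𝓕, ∀ k ∉ B, μ k (∑ j ∈ B, b₀ j • w B j) < b₀ k
  complete : ∀ B ∈ 𝓕, ∀ i ∈ B, ∀ k ∉ B,
    (∀ x, (∀ j ∈ insert k (B.erase i), μ j x = 0) → x = 0) →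
    ∀ y, (∀ j ∈ insert k (B.erase i), μ j y = b₀ j) → (∀ l, μ l y ≤ b₀ l) →
      insert k (B.erase i) ∈ 𝓕

section vertex

variable {ι V : Type*} [DecidableEq ι] [AddCommGroup V] [Module ℝ V]
  {μ : ι → Module.Dual ℝ V} {b₀ : ι → ℝ} {𝓕 : Finset (Finset ι)} {w : Finset ι → ι → V}

namespace IsSimpleVertexSystem

theorem apply_sum (h : IsSimpleVertexSystem μ b₀ 𝓕 w) {B : Finset ι} (hB : B ∈ 𝓕) (b : ι → ℝ)
    {i : ι} (hi : i ∈ B) : μ i (∑ j ∈ B, b j • w B j) = b i := by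
  simp only [map_sum, map_smul, smul_eq_mul]
  rw [Finset.sum_congr rfl fun j hj => by rw [h.dual B hB i hi j hj]]
  simp [hi]

theorem eq_sum (h : IsSimpleVertexSystem μ b₀ 𝓕 w) {B : Finset ι} (hB : B ∈ 𝓕) (x : V) :
    x = ∑ j ∈ B, μ j x • w B j :=
  sub_eq_zero.mp <| h.separating B hB _ fun j hj => by
    rw [map_sub, h.apply_sum hB (fun j => μ j x) hj, sub_self]

theorem eq_smul (h : IsSimpleVertexSystem μ b₀ 𝓕 w) {B : Finset ι} (hB : B ∈ 𝓕) {i : ι}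
    (hi : i ∈ B) {x : V} (hx : ∀ j ∈ B.erase i, μ j x = 0) : x = μ i x • w B i := by
  conv_lhs => rw [h.eq_sum hB x]
  refine Finset.sum_eq_single_of_mem i hi fun j hj hji => ?_
  rw [hx j (Finset.mem_erase.mpr ⟨hji, hj⟩), zero_smul]

theorem le (h : IsSimpleVertexSystem μ b₀ 𝓕 w) {B : Finset ι} (hB : B ∈ 𝓕) (k : ι) :
    μ k (∑ j ∈ B, b₀ j • w B j) ≤ b₀ k := by
  by_cases hk : k ∈ B
  · exact (h.apply_sum hB b₀ hk).le
  · exact (h.lt B hB k hk).le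

theorem exists_pivot [Finite ι] (h : IsSimpleVertexSystem μ b₀ 𝓕 w) {B : Finset ι} (hB : B ∈ 𝓕)
    {i : ι} (hi : i ∈ B) : ∃ B' ∈ 𝓕, ∃ k ∈ B', B' ≠ B ∧ B'.erase k = B.erase i := by
  classical
  have := Fintype.ofFinite ι
  set y := ∑ j ∈ B, b₀ j • w B j with hy
  have hwi : ∀ j ∈ B.erase i, μ j (w B i) = 0 := fun j hj => by
    rw [h.dual B hB j (Finset.mem_of_mem_erase hj) i hi, if_neg (Finset.ne_of_mem_erase hj)]
  have hii : μ i (w B i) = 1 := by rw [h.dual B hB i hi i hi, if_pos rfl]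
  have hw0 : w B i ≠ 0 := fun h0 => by simp [h0] at hii
  have hnotMem : ∀ k, μ k (w B i) < 0 → k ∉ B := by
    intro k hk hkB
    rw [h.dual B hB k hkB i hi] at hk
    split_ifs at hk <;> linarith
  let K : Finset ι := {k | μ k (w B i) < 0}
  obtain ⟨k₀, hk₀⟩ := h.exists_neg _ hw0
  obtain ⟨k, hkK, hmin⟩ := K.exists_min_image (fun k => (b₀ k - μ k y) / -μ k (w B i))
    ⟨k₀, by simpa [K] using hk₀⟩
  have hk : μ k (w B i) < 0 := by simpa [K] using hkK
  have hkB := hnotMem k hk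
  set ρ := (b₀ k - μ k y) / -μ k (w B i) with hρ
  have hρpos : 0 < ρ := div_pos (sub_pos.mpr (h.lt B hB k hkB)) (neg_pos.mpr hk)
  have hki : k ∉ B.erase i := fun hk' => hkB (Finset.mem_of_mem_erase hk')
  refine ⟨insert k (B.erase i), ?_, k, Finset.mem_insert_self _ _, fun he =>
    hkB (he ▸ Finset.mem_insert_self _ _), Finset.erase_insert hki⟩
  have happ : ∀ l, μ l (y - ρ • w B i) = μ l y - ρ * μ l (w B i) := fun l => by simp
  have hyk : μ k (y - ρ • w B i) = b₀ k := by
    rw [happ, hρ]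
    have := hk.ne
    field_simp
    ring
  have hyA : ∀ j ∈ B.erase i, μ j (y - ρ • w B i) = b₀ j := by
    intro j hj
    rw [happ, hwi j hj, mul_zero, sub_zero, hy, h.apply_sum hB b₀ (Finset.mem_of_mem_erase hj)]
  refine h.complete B hB i hi k hkB (fun x hx => ?_) (y - ρ • w B i) (fun j hj => ?_) fun l => ?_
  · have hx' := h.eq_smul hB hi fun j hj => hx j (Finset.mem_insert_of_mem hj)
    have hxk := hx k (Finset.mem_insert_self _ _)
    rw [hx', map_smul, smul_eq_mul, mul_eq_zero, or_iff_left hk.ne] at hxk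
    rw [hx', hxk, zero_smul]
  · rcases Finset.mem_insert.mp hj with rfl | hj
    · exact hyk
    · exact hyA j hj
  · rw [happ]
    have hle := h.le hB l
    rcases lt_or_ge (μ l (w B i)) 0 with hl | hl
    · have := hmin l (by simpa [K] using hl)
      rw [le_div_iff₀ (neg_pos.mpr hl)] at this
      linarith
    · nlinarith

theorem sub_eq_smul_neg (h : IsSimpleVertexSystem μ b₀ 𝓕 w) {B B' : Finset ι} (hB : B ∈ 𝓕)
    (hB' : B' ∈ 𝓕) {i k : ι} (hi : i ∈ B) (hk : k ∈ B') (hne : B' ≠ B)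
    (he : B'.erase k = B.erase i) : ∃ r : ℝ, 0 < r ∧ w B' k = -r • w B i := by
  have hkB : k ∉ B := by
    intro hkB
    have hki : k = i := by
      by_contra hki
      exact Finset.notMem_erase k B' (he ▸ Finset.mem_erase.mpr ⟨hki, hkB⟩)
    exact hne (by rw [← Finset.insert_erase hk, he, hki, Finset.insert_erase hi])
  have hiB' : i ∉ B' := by
    intro hiB'
    have hki : i = k := by
      by_contra hki
      exact Finset.notMem_erase i B (he ▸ Finset.mem_erase.mpr ⟨hki, hiB'⟩)
    exact hkB (hki ▸ hi)
  have hw : w B' k = μ i (w B' k) • w B i := by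
    refine h.eq_smul hB hi fun j hj => ?_
    rw [← he] at hj
    rw [h.dual B' hB' j (Finset.mem_of_mem_erase hj) k hk, if_neg (Finset.ne_of_mem_erase hj)]
  set y := ∑ j ∈ B, b₀ j • w B j
  set y' := ∑ j ∈ B', b₀ j • w B' j
  have hy : y' - y = μ i (y' - y) • w B i := by
    refine h.eq_smul hB hi fun j hj => ?_
    rw [map_sub, h.apply_sum hB b₀ (Finset.mem_of_mem_erase hj),
      h.apply_sum hB' b₀ (Finset.mem_of_mem_erase (he ▸ hj)), sub_self]
  have h1 : μ i (y' - y) < 0 := by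
    rw [map_sub, h.apply_sum hB b₀ hi, sub_neg]
    exact h.lt B' hB' i hiB'
  have h2 : 0 < μ k (y' - y) := by
    rw [map_sub, h.apply_sum hB' b₀ hk, sub_pos]
    exact h.lt B hB k hkB
  have h3 : μ k (w B i) < 0 := by
    rw [hy, map_smul, smul_eq_mul] at h2
    exact (neg_iff_neg_of_mul_pos h2).mp h1
  have h4 : μ i (w B' k) * μ k (w B i) = 1 := by
    have := congrArg (μ k) hw
    rw [map_smul, smul_eq_mul, h.dual B' hB' k hk k hk, if_pos rfl] at this
    exact this.symm
  refine ⟨-μ i (w B' k), ?_, by rw [neg_neg]; exact hw⟩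
  nlinarith

theorem isPivotSystem [Finite ι] (h : IsSimpleVertexSystem μ b₀ 𝓕 w) : IsPivotSystem μ 𝓕 w where
  dual := h.dual
  exists_pivot _ hB _ hi := h.exists_pivot hB hi
  opposite _ hB _ hi _ hB' _ hk hne he := h.sub_eq_smul_neg hB hB' hi hk hne he
  congr B hB i hi B' hB' k hk hne he j hj := by
    refine ⟨μ i (w B' j - w B j), ?_⟩
    rw [← h.eq_smul hB hi fun l hl => ?_, add_sub_cancel]
    rw [map_sub, h.dual B hB l (Finset.mem_of_mem_erase hl) j (Finset.mem_of_mem_erase hj),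
      h.dual B' hB' l (Finset.mem_of_mem_erase (he ▸ hl)) j (Finset.mem_of_mem_erase (he ▸ hj)),
      sub_self]

theorem exists_polarSum_zero_eq_one [Finite ι] (h : IsSimpleVertexSystem μ b₀ 𝓕 w) :
    ∃ ξ : Module.Dual ℝ V, (∀ B ∈ 𝓕, ∀ i ∈ B, ξ (w B i) ≠ 0) ∧ polarSum 𝓕 w 0 ξ = 1 := by
  obtain ⟨B₀, hB₀⟩ := h.nonempty
  set y : Finset ι → V := fun B => ∑ j ∈ B, b₀ j • w B j with hy
  have hζ : ∀ u ∈ (fun j => -w B₀ j) '' B₀ ∪ (fun B => y B - y B₀) '' {B | B ∈ 𝓕 ∧ B ≠ B₀},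
      (∑ j ∈ B₀, μ j) u < 0 := by
    rintro u (⟨j, hj, rfl⟩ | ⟨B, ⟨hB, hBB⟩, rfl⟩)
    · simp only [LinearMap.sum_apply, map_neg, neg_lt_zero]
      rw [Finset.sum_congr rfl fun i hi => h.dual B₀ hB₀ i hi j hj]
      simp [Finset.mem_coe.mp hj]
    · rw [LinearMap.sum_apply]
      obtain ⟨i, hi, hiB⟩ : ∃ i ∈ B₀, i ∉ B := by
        by_contra! hsub
        obtain ⟨k, hk, hk₀⟩ := Finset.exists_of_ssubset
          (Finset.ssubset_iff_subset_ne.mpr ⟨hsub, hBB.symm⟩)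
        refine h.isPivotSystem.ne_zero hB hk (h.separating B₀ hB₀ _ fun j hj => ?_)
        rw [h.dual B hB j (hsub j hj) k hk, if_neg]
        rintro rfl
        exact hk₀ hj
      refine Finset.sum_neg' (fun j hj => ?_) ⟨i, hi, ?_⟩
      · rw [map_sub, hy, h.apply_sum hB₀ b₀ hj, sub_nonpos]
        exact h.le hB j
      · rw [map_sub, hy, h.apply_sum hB₀ b₀ hi, sub_neg]
        exact h.lt B hB i hiB
  obtain ⟨ξ, hξ, hξ'⟩ := exists_dual_forall_ne_zero_and_neg
    (S := Set.range (fun p : Finset ι × ι => w p.1 p.2) \ {0})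
    (T := (fun j => -w B₀ j) '' B₀ ∪ (fun B => y B - y B₀) '' {B | B ∈ 𝓕 ∧ B ≠ B₀})
    ((Set.finite_range _).sdiff) ((Set.toFinite _).union (Set.toFinite _)) (fun v hv => hv.2)
    (∑ j ∈ B₀, μ j) hζ
  have hne : ∀ B ∈ 𝓕, ∀ i ∈ B, ξ (w B i) ≠ 0 := fun B hB i hi =>
    hξ _ ⟨⟨(B, i), rfl⟩, h.isPivotSystem.ne_zero hB hi⟩
  refine ⟨ξ, hne, ?_⟩
  rw [polarSum, Finset.sum_eq_single_of_mem B₀ hB₀]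
  · refine Finset.prod_eq_one fun j hj => ?_
    have := hξ' _ (Or.inl ⟨j, hj, rfl⟩)
    rw [map_neg, neg_lt_zero] at this
    simp [this]
  · intro B hB hBB
    by_contra hprod
    rw [← ne_eq, Finset.prod_ne_zero_iff] at hprod
    have hpos : ∀ j ∈ B, 0 < ξ (w B j) := fun j hj => by
      by_contra hneg
      exact hprod j hj (by simp [hneg])
    have hlt := hξ' _ (Or.inr ⟨B, ⟨hB, hBB⟩, rfl⟩)
    beta_reduce at hlt
    refine hlt.not_ge ?_
    rw [h.eq_sum hB (y B - y B₀), map_sum]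
    refine Finset.sum_nonneg fun j hj => ?_
    rw [map_smul, smul_eq_mul, map_sub, hy]
    refine mul_nonneg (sub_nonneg.mpr ?_) (hpos j hj).le
    rw [h.apply_sum hB b₀ hj]
    exact h.le hB₀ j

/-- The polarized decomposition: the indicator function of a polytope is the signed sum of the
indicator functions of its polarized vertex cones. -/
theorem polarSum_eq_indicator [Finite ι] (h : IsSimpleVertexSystem μ b₀ 𝓕 w)
    {ξ : Module.Dual ℝ V} (hξ : ∀ B ∈ 𝓕, ∀ i ∈ B, ξ (w B i) ≠ 0) {b : ι → ℝ}
    (hb : ∀ B ∈ 𝓕, ∀ k ∉ B, μ k (∑ j ∈ B, b j • w B j) ≤ b k) (x : V)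
    [Decidable (∀ j, μ j x ≤ b j)] :
    polarSum 𝓕 w (fun j => if μ j x ≤ b j then 0 else 1) ξ =
      if ∀ j, μ j x ≤ b j then 1 else 0 := by
  split_ifs with hx
  · obtain ⟨ξ₁, hξ₁, hone⟩ := h.exists_polarSum_zero_eq_one
    rw [← hone, ← h.isPivotSystem.polarSum_eq 0 hξ hξ₁]
    congr 1
    ext j
    simp [hx j]
  · push Not at hx
    obtain ⟨j, hj⟩ := hx
    have hle : ∀ B ∈ 𝓕, μ j (∑ j ∈ B, b j • w B j) ≤ b j := fun B hB => by
      by_cases hjB : j ∈ B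
      · exact (h.apply_sum hB b hjB).le
      · exact hb B hB j hjB
    obtain ⟨ξ₁, hξ₁, hneg⟩ := exists_dual_forall_ne_zero_and_neg
      (S := Set.range (fun p : Finset ι × ι => w p.1 p.2) \ {0})
      (T := (fun B => ∑ j ∈ B, b j • w B j - x) '' {B | B ∈ 𝓕})
      ((Set.finite_range _).sdiff) (Set.toFinite _) (fun v hv => hv.2) (μ j) (by
        rintro _ ⟨B, hB, rfl⟩
        rw [map_sub, sub_neg]
        exact (hle B hB).trans_lt hj)
    rw [h.isPivotSystem.polarSum_eq _ hξ fun B hB i hi =>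
      hξ₁ _ ⟨⟨(B, i), rfl⟩, h.isPivotSystem.ne_zero hB hi⟩]
    refine Finset.sum_eq_zero fun B hB => ?_
    have hlt := hneg _ ⟨B, hB, rfl⟩
    beta_reduce at hlt
    rw [h.eq_sum hB (_ - x), map_sum] at hlt
    obtain ⟨l, hl, hlt⟩ := Finset.exists_lt_of_sum_lt (s := B) (g := fun _ => (0 : ℝ))
      (hlt.trans_eq Finset.sum_const_zero.symm)
    rw [map_smul, smul_eq_mul, map_sub, h.apply_sum hB b hl] at hlt
    refine Finset.prod_eq_zero hl ?_
    rcases mul_neg_iff.mp hlt with ⟨h1, h2⟩ | ⟨h1, h2⟩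
    · simp [(sub_pos.mp h1).le, h2.not_gt]
    · simp [(sub_neg.mp h1).not_ge, h2]

end IsSimpleVertexSystem

end vertex

/-! ### Powers of generic linear forms -/

section powers

open MvPolynomial

variable {d : ℕ}

/-- Homogeneous polynomials of degree `m` are combinations of `m`-th powers of linear forms that
do not vanish on a given finite set of nonzero integer vectors. -/
theorem isHomogeneous_mem_span_pow {m : ℕ} {h : MvPolynomial (Fin d) ℝ} (hh : h.IsHomogeneous m)
    (V : Finset (Fin d → ℤ)) (hV : ∀ v ∈ V, v ≠ 0) :
    h ∈ Submodule.span ℝ {p : MvPolynomial (Fin d) ℝ | ∃ l : Fin d → ℝ,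
      (∀ v ∈ V, latticePairing l v ≠ 0) ∧ p = (∑ j, C (l j) * X j) ^ m} := by
  by_contra hmem
  obtain ⟨φ, hφ, hker⟩ := Submodule.exists_le_ker_of_notMem hmem
  let e : (Fin d → ℕ) ≃ (Fin d →₀ ℕ) := Finsupp.equivFunOnFinite.symm
  set F : MvPolynomial (Fin d) ℝ := ∑ k ∈ Finset.univ.piAntidiag m,
    monomial (e k) ((Nat.multinomial Finset.univ k : ℝ) * φ (monomial (e k) 1)) with hF
  have hmono : ∀ k : Fin d → ℕ, (monomial (e k) 1 : MvPolynomial (Fin d) ℝ) = ∏ i, X i ^ k i := by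
    intro k
    rw [monomial_eq, C_1, one_mul, Finsupp.prod_fintype _ _ fun i => pow_zero _]
    rfl
  have heval : ∀ l : Fin d → ℝ, eval l F = φ ((∑ j, C (l j) * X j) ^ m) := by
    intro l
    rw [Finset.sum_pow_eq_sum_piAntidiag, hF, map_sum, map_sum]
    refine Finset.sum_congr rfl fun k _ => ?_
    have : (Nat.multinomial Finset.univ k : MvPolynomial (Fin d) ℝ) *
        ∏ i, (C (l i) * X i : MvPolynomial (Fin d) ℝ) ^ k i =
        ((Nat.multinomial Finset.univ k : ℝ) * ∏ i, l i ^ k i) • monomial (e k) 1 := by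
      rw [hmono, smul_eq_C_mul, C_mul, map_prod]
      simp only [mul_pow, Finset.prod_mul_distrib, map_pow, map_natCast]
      ring
    rw [this, map_smul, smul_eq_mul, eval_monomial, Finsupp.prod_fintype _ _ fun i => pow_zero _]
    simp only [e, Finsupp.equivFunOnFinite_symm_apply_apply]
    ring
  have hfac : ∀ v ∈ V, (∑ j, C (v j : ℝ) * X j : MvPolynomial (Fin d) ℝ) ≠ 0 := by
    intro v hv h0
    refine hV v hv (funext fun i => ?_)
    have := congrArg (eval (Pi.single i 1)) h0
    simpa [Pi.single_apply] using this
  have hzero : F * ∏ v ∈ V, (∑ j, C (v j : ℝ) * X j) = 0 := by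
    refine MvPolynomial.funext fun l => ?_
    rw [map_mul, map_prod, map_zero]
    by_cases hl : ∀ v ∈ V, latticePairing l v ≠ 0
    · rw [heval, hker (Submodule.subset_span ⟨l, hl, rfl⟩), zero_mul]
    · push Not at hl
      obtain ⟨v, hv, hl⟩ := hl
      rw [Finset.prod_eq_zero hv, mul_zero]
      simpa [latticePairing, mul_comm] using hl
  have hF0 : F = 0 := (mul_eq_zero.mp hzero).resolve_right (Finset.prod_ne_zero_iff.mpr hfac)
  refine hφ ?_
  rw [h.as_sum, map_sum]
  refine Finset.sum_eq_zero fun k hk => ?_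
  have hdeg : ∑ i, k i = m := by
    have := hh (mem_support_iff.mp hk)
    simpa [Finsupp.weight_apply, Finsupp.sum_fintype] using this
  have hcoeff := congrArg (coeff k) hF0
  rw [hF, coeff_sum, Finset.sum_eq_single_of_mem (e.symm k)
    (Finset.mem_piAntidiag.mpr ⟨hdeg, by simp⟩), Equiv.apply_symm_apply, coeff_monomial,
    if_pos rfl, coeff_zero, mul_eq_zero, Nat.cast_eq_zero,
    or_iff_right (Nat.multinomial_pos _ _).ne'] at hcoeff
  · rw [← mul_one (coeff k h), ← smul_eq_mul, ← smul_monomial, map_smul, hcoeff, smul_zero]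
  · intro k' _ hne
    rw [coeff_monomial, if_neg]
    rintro rfl
    exact hne (Equiv.symm_apply_apply _ _).symm

end powers

/-! ### The vertex system of a chamber -/

section chamber

open Module

section separating

variable {ι V : Type*} [AddCommGroup V] [Module ℝ V] {μ : ι → Dual ℝ V}

theorem eq_zero_of_span_eq_top {B : Finset ι}
    (h : Submodule.span ℝ (Set.range fun j : {j // j ∈ B} => μ j.1) = ⊤) {x : V}
    (hx : ∀ j ∈ B, μ j x = 0) : x = 0 := by
  refine (Module.forall_dual_apply_eq_zero_iff ℝ x).mp fun φ => ?_
  have hφ : φ ∈ Submodule.span ℝ (Set.range fun j : {j // j ∈ B} => μ j.1) :=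
    h ▸ Submodule.mem_top
  induction hφ using Submodule.span_induction with
  | mem _ h => obtain ⟨j, rfl⟩ := h; exact hx j j.2
  | zero => rfl
  | add _ _ _ _ h₁ h₂ => rw [LinearMap.add_apply, h₁, h₂, add_zero]
  | smul a _ _ h => rw [LinearMap.smul_apply, h, smul_zero]

theorem span_eq_top_of_forall_eq_zero [FiniteDimensional ℝ V] {B : Finset ι}
    (h : ∀ x, (∀ j ∈ B, μ j x = 0) → x = 0) :
    Submodule.span ℝ (Set.range fun j : {j // j ∈ B} => μ j.1) = ⊤ := by
  set W := Submodule.span ℝ (Set.range fun j : {j // j ∈ B} => μ j.1)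
  have hbot : W.dualCoannihilator = ⊥ := by
    refine (Submodule.eq_bot_iff _).mpr fun x hx => h x fun j hj => ?_
    exact (Submodule.mem_dualCoannihilator x).mp hx _ (Submodule.subset_span ⟨⟨j, hj⟩, rfl⟩)
  rw [← Subspace.dualCoannihilator_dualAnnihilator_eq (W := W), hbot,
    Submodule.dualAnnihilator_bot]

/-- A finite family of linear forms is a basis of the dual space iff it separates points and has
the right cardinality. -/
theorem linearIndependent_and_span_eq_top_iff [FiniteDimensional ℝ V] {B : Finset ι} :
    (LinearIndependent ℝ (fun j : {j // j ∈ B} => μ j.1) ∧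
      Submodule.span ℝ (Set.range fun j : {j // j ∈ B} => μ j.1) = ⊤) ↔
    B.card = finrank ℝ V ∧ ∀ x, (∀ j ∈ B, μ j x = 0) → x = 0 := by
  constructor
  · rintro ⟨hli, hsp⟩
    refine ⟨?_, fun x => eq_zero_of_span_eq_top hsp⟩
    rw [← Subspace.dual_finrank_eq, finrank_eq_card_basis (Basis.mk hli hsp.ge), Fintype.card_coe]
  · rintro ⟨hcard, hsep⟩
    have hsp := span_eq_top_of_forall_eq_zero hsep
    refine ⟨linearIndependent_of_top_le_span_of_card_eq_finrank hsp.ge ?_, hsp⟩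
    rw [Fintype.card_coe, hcard, Subspace.dual_finrank_eq]

end separating

variable {d N : ℕ} {μ : Fin N → Dual ℝ (Fin d → ℝ)}

theorem isBounded_polyhedron
    (hgen : ∀ ξ : Dual ℝ (Fin d → ℝ), ∃ c : Fin N → ℝ, (∀ j, 0 ≤ c j) ∧ ξ = ∑ j, c j • μ j)
    (b : Fin N → ℝ) : Bornology.IsBounded {x | ∀ j, μ j x ≤ b j} := by
  have hle : ∀ ξ : Dual ℝ (Fin d → ℝ), ∃ C, ∀ x ∈ {x | ∀ j, μ j x ≤ b j}, ξ x ≤ C := by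
    intro ξ
    obtain ⟨c, hc, rfl⟩ := hgen ξ
    refine ⟨∑ j, c j * b j, fun x hx => ?_⟩
    simp only [LinearMap.sum_apply, LinearMap.smul_apply, smul_eq_mul]
    exact Finset.sum_le_sum fun j _ => mul_le_mul_of_nonneg_left (hx j) (hc j)
  choose lo hlo using fun i => hle (-LinearMap.proj i)
  choose hi hhi using fun i => hle (LinearMap.proj i)
  refine (Metric.isBounded_Icc (-lo) hi).subset fun x hx => ⟨fun i => ?_, fun i => hhi i x hx⟩
  exact neg_le.mp (hlo i x hx)

theorem isClosed_polyhedron (b : Fin N → ℝ) : IsClosed {x | ∀ j, μ j x ≤ b j} := by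
  simp only [Set.ofPred_forall]
  exact isClosed_iInter fun j =>
    isClosed_le (μ j).continuous_of_finiteDimensional continuous_const

theorem convex_polyhedron (b : Fin N → ℝ) : Convex ℝ {x | ∀ j, μ j x ≤ b j} := by
  simp only [Set.ofPred_forall]
  exact convex_iInter fun j => convex_halfSpace_le (μ j).isLinear _

/-- The constraints active at an extreme point of a polyhedron separate points. -/
theorem eq_zero_of_mem_extremePoints {b : Fin N → ℝ} {x v : Fin d → ℝ}
    (hx : x ∈ Set.extremePoints ℝ {x | ∀ j, μ j x ≤ b j})
    (hv : ∀ j, μ j x = b j → μ j v = 0) : v = 0 := by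
  have hev : ∀ᶠ ε : ℝ in nhdsWithin 0 (Set.Ioi 0), ∀ j, ε * |μ j v| ≤ b j - μ j x := by
    refine Filter.eventually_all.mpr fun j => ?_
    rcases (hx.1 j).eq_or_lt with h | h
    · exact Filter.Eventually.of_forall fun ε => by rw [hv j h, h]; simp
    · have : Filter.Tendsto (fun ε : ℝ => ε * |μ j v|) (nhdsWithin 0 (Set.Ioi 0)) (nhds 0) :=
        ((continuous_id.mul continuous_const).tendsto' 0 0 (zero_mul _)).mono_left
          nhdsWithin_le_nhds
      exact (this.eventually (gt_mem_nhds (sub_pos.mpr h))).mono fun ε hε => hε.le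
  obtain ⟨ε, hε, hpos⟩ := (hev.and self_mem_nhdsWithin).exists
  have hmem : ∀ σ : ℝ, |σ| = 1 → x + (σ * ε) • v ∈ {x | ∀ j, μ j x ≤ b j} := by
    intro σ hσ j
    have h₁ : σ * ε * μ j v ≤ ε * |μ j v| := by
      refine (le_abs_self _).trans_eq ?_
      rw [abs_mul, abs_mul, hσ, one_mul, abs_of_pos hpos]
    rw [map_add, map_smul, smul_eq_mul]
    linarith [hε j]
  have hseg : x ∈ openSegment ℝ (x + ((1 : ℝ) * ε) • v) (x + ((-1 : ℝ) * ε) • v) :=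
    ⟨1 / 2, 1 / 2, by norm_num, by norm_num, by norm_num, by module⟩
  have heq := hx.2 (hmem 1 (by simp)) (hmem (-1) (by simp)) hseg
  rw [add_eq_left, one_mul] at heq
  exact (smul_eq_zero.mp heq).resolve_left (ne_of_gt hpos)

variable {𝓑 : Set (Finset (Fin N))} {sB : Finset (Fin N) → ((Fin N → ℝ) →ₗ[ℝ] (Fin d → ℝ))}

/-- The vertex map of a basis in terms of the dual basis. -/
theorem sum_smul_vertexMap_single {B : Finset (Fin N)}
    (hsep : ∀ x, (∀ j ∈ B, μ j x = 0) → x = 0)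
    (hs : ∀ b : Fin N → ℝ, ∀ j ∈ B, μ j (sB B b) = b j) (b : Fin N → ℝ) :
    ∑ j ∈ B, b j • sB B (Pi.single j 1) = sB B b := by
  refine sub_eq_zero.mp (hsep _ fun i hi => ?_)
  rw [map_sub, map_sum, hs b i hi]
  simp only [map_smul, smul_eq_mul, hs _ i hi, Pi.single_apply, mul_ite, mul_one, mul_zero]
  rw [Finset.sum_ite_eq B i, if_pos hi, sub_self]

theorem exists_vertex
    (hgen : ∀ ξ : Dual ℝ (Fin d → ℝ), ∃ c : Fin N → ℝ, (∀ j, 0 ≤ c j) ∧ ξ = ∑ j, c j • μ j)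
    (h𝓑 : ∀ B : Finset (Fin N), B ∈ 𝓑 ↔
      (LinearIndependent ℝ (fun j : {j // j ∈ B} => μ j.1) ∧
        Submodule.span ℝ (Set.range (fun j : {j // j ∈ B} => μ j.1)) = ⊤))
    (hsB : ∀ B ∈ 𝓑, ∀ b : Fin N → ℝ, ∀ j ∈ B, μ j (sB B b) = b j)
    {b : Fin N → ℝ} (hne : {x | ∀ j, μ j x ≤ b j}.Nonempty) :
    ∃ B ∈ 𝓑, ∀ k, μ k (sB B b) ≤ b k := by
  classical
  obtain ⟨x, hx⟩ := (Metric.isCompact_of_isClosed_isBounded (isClosed_polyhedron b)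
    (isBounded_polyhedron hgen b)).extremePoints_nonempty hne
  obtain ⟨S, hSsub, -, hspan, hli⟩ := exists_linearIndepOn_extension
    (linearIndepOn_empty ℝ μ) (Set.empty_subset {j | μ j x = b j})
  have hsep : ∀ y, (∀ j ∈ S.toFinset, μ j y = 0) → y = 0 := by
    refine fun y hy => eq_zero_of_mem_extremePoints hx fun j hj => ?_
    have hmem : μ j ∈ Submodule.span ℝ (μ '' S) := hspan ⟨j, hj, rfl⟩
    have hle : Submodule.span ℝ (μ '' S) ≤ LinearMap.ker (Dual.eval ℝ (Fin d → ℝ) y) := by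
      rw [Submodule.span_le]
      rintro _ ⟨i, hi, rfl⟩
      exact hy i (Set.mem_toFinset.mpr hi)
    exact hle hmem
  have hB : S.toFinset ∈ 𝓑 := by
    refine (h𝓑 _).mpr ⟨?_, span_eq_top_of_forall_eq_zero hsep⟩
    have : LinearIndepOn ℝ μ (S.toFinset : Set (Fin N)) := by rwa [Set.coe_toFinset]
    exact this
  refine ⟨_, hB, ?_⟩
  have heq : sB S.toFinset b = x := by
    refine sub_eq_zero.mp (hsep _ fun j hj => ?_)
    rw [map_sub, hsB _ hB b j hj, hSsub (Set.mem_toFinset.mp hj), sub_self]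
  rw [heq]
  exact hx.1

theorem isSimpleVertexSystem_of_chamber
    (hgen : ∀ ξ : Dual ℝ (Fin d → ℝ), ∃ c : Fin N → ℝ, (∀ j, 0 ≤ c j) ∧ ξ = ∑ j, c j • μ j)
    (h𝓑 : ∀ B : Finset (Fin N), B ∈ 𝓑 ↔
      (LinearIndependent ℝ (fun j : {j // j ∈ B} => μ j.1) ∧
        Submodule.span ℝ (Set.range (fun j : {j // j ∈ B} => μ j.1)) = ⊤))
    (hsB : ∀ B ∈ 𝓑, ∀ b : Fin N → ℝ, ∀ j ∈ B, μ j (sB B b) = b j)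
    {b₀ : Fin N → ℝ} (hb₀ : ∀ B ∈ 𝓑, b₀ ∉ frontier {b | ∀ k ∉ B, μ k (sB B b) ≤ b k})
    (hne : {x | ∀ j, μ j x ≤ b₀ j}.Nonempty) {𝓕 : Finset (Finset (Fin N))}
    (h𝓕 : ∀ B, B ∈ 𝓕 ↔ B ∈ 𝓑 ∧ ∀ k ∉ B, μ k (sB B b₀) ≤ b₀ k) :
    IsSimpleVertexSystem μ b₀ 𝓕 fun B j => sB B (Pi.single j 1) := by
  have hbasis : ∀ B, B ∈ 𝓑 ↔ B.card = finrank ℝ (Fin d → ℝ) ∧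
      ∀ x, (∀ j ∈ B, μ j x = 0) → x = 0 :=
    fun B => (h𝓑 B).trans linearIndependent_and_span_eq_top_iff
  have hsum : ∀ B ∈ 𝓑, ∀ b : Fin N → ℝ, ∑ j ∈ B, b j • sB B (Pi.single j 1) = sB B b :=
    fun B hB => sum_smul_vertexMap_single ((hbasis B).mp hB).2 (hsB B hB)
  refine ⟨?_, ?_, ?_, ?_, ?_, ?_⟩
  · obtain ⟨B, hB, hle⟩ := exists_vertex hgen h𝓑 hsB hne
    exact ⟨B, (h𝓕 B).mpr ⟨hB, fun k _ => hle k⟩⟩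
  · intro v hv
    by_contra! hpos
    obtain ⟨φ, hφ⟩ : ∃ φ : Dual ℝ (Fin d → ℝ), φ v ≠ 0 := by
      by_contra! h
      exact hv ((Module.forall_dual_apply_eq_zero_iff ℝ v).mp h)
    have hall : ∀ ξ : Dual ℝ (Fin d → ℝ), 0 ≤ ξ v := by
      intro ξ
      obtain ⟨c, hc, rfl⟩ := hgen ξ
      simp only [LinearMap.sum_apply, LinearMap.smul_apply, smul_eq_mul]
      exact Finset.sum_nonneg fun j _ => mul_nonneg (hc j) (hpos j)
    have := hall (-φ)
    rw [LinearMap.neg_apply] at this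
    exact hφ (le_antisymm (by linarith) (hall φ))
  · intro B hB i hi j _
    rw [hsB B ((h𝓕 B).mp hB).1 _ i hi, Pi.single_apply]
  · exact fun B hB => ((hbasis B).mp ((h𝓕 B).mp hB).1).2
  · intro B hB k hk
    have hB' := (h𝓕 B).mp hB
    rw [hsum B hB'.1]
    refine (hB'.2 k hk).lt_of_ne fun heq => hb₀ B hB'.1 ⟨subset_closure hB'.2, fun h_int => ?_⟩
    have hcont : Filter.Tendsto (fun ε : ℝ => b₀ - ε • Pi.single k (1 : ℝ))
        (nhdsWithin 0 (Set.Ioi 0)) (nhds b₀) :=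
      ((by fun_prop : Continuous fun ε : ℝ => b₀ - ε • Pi.single k (1 : ℝ)).tendsto' 0 b₀
        (by simp)).mono_left nhdsWithin_le_nhds
    obtain ⟨ε, hmem, hpos⟩ := ((hcont.eventually
      (mem_interior_iff_mem_nhds.mp h_int)).and self_mem_nhdsWithin).exists
    have hpos : 0 < ε := hpos
    have hsingle : sB B (Pi.single k 1) = 0 := by
      rw [← hsum B hB'.1]
      refine Finset.sum_eq_zero fun j hj => ?_
      rw [Pi.single_eq_of_ne (ne_of_mem_of_not_mem hj hk), zero_smul]
    have hle : μ k (sB B (b₀ - ε • Pi.single k 1)) ≤ (b₀ - ε • Pi.single k 1 : Fin N → ℝ) k :=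
      hmem k hk
    rw [map_sub, map_smul, hsingle, smul_zero, sub_zero, heq] at hle
    simp only [Pi.sub_apply, Pi.smul_apply, Pi.single_eq_same, smul_eq_mul, mul_one] at hle
    linarith
  · intro B hB i hi k hk hsep y hy hle
    have hB' : insert k (B.erase i) ∈ 𝓑 := by
      refine (hbasis _).mpr ⟨?_, hsep⟩
      rw [Finset.card_insert_of_notMem (fun h => hk (Finset.mem_of_mem_erase h)),
        Finset.card_erase_add_one hi, ((hbasis B).mp ((h𝓕 B).mp hB).1).1]
    have heq : sB (insert k (B.erase i)) b₀ = y := by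
      refine sub_eq_zero.mp (hsep _ fun j hj => ?_)
      rw [map_sub, hsB _ hB' b₀ j hj, hy j hj, sub_self]
    exact (h𝓕 _).mpr ⟨hB', fun l _ => heq ▸ hle l⟩

/-- A preconnected set that meets a closed set but not its frontier lies in it. -/
theorem IsPreconnected.closure_subset_of_disjoint_frontier {X : Type*} [TopologicalSpace X]
    {τ D : Set X} (hτ : IsPreconnected τ) (hD : IsClosed D) (hdisj : Disjoint τ (frontier D))
    (hne : (τ ∩ D).Nonempty) : closure τ ⊆ D := by
  have h_int : ∀ x ∈ τ, x ∈ D → x ∈ interior D := fun x hx hxD => by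
    by_contra h
    exact hdisj.le_bot ⟨hx, subset_closure hxD, h⟩
  refine closure_minimal ((hτ.subset_left_of_subset_union isOpen_interior hD.isOpen_compl
    (disjoint_compl_right.mono_left interior_subset) (fun x hx => ?_) ?_).trans interior_subset) hD
  · by_cases hxD : x ∈ D
    exacts [Or.inl (h_int x hx hxD), Or.inr hxD]
  · obtain ⟨x, hx, hxD⟩ := hne
    exact ⟨x, hx, h_int x hx hxD⟩

end chamber

/-! ### Expansions with step-polynomial coefficients -/

section expansion

variable {d N : ℕ}

/-- For generic `l`, the functions `f b` have regularized exponential sums whose `n`-th coefficients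
are step-polynomials in `b` of degree at most `n`. -/
def HasStepExpansion (f : (Fin N → ℝ) → (Fin d → ℤ) → ℝ) : Prop :=
  ∃ (Ψ : Finset (Fin N → ℚ)) (V : Finset (Fin d → ℤ)), (∀ v ∈ V, v ≠ 0) ∧
    ∀ l : Fin d → ℝ, (∀ v ∈ V, latticePairing l v ≠ 0) →
      ∃ S : (Fin N → ℝ) → PowerSeries ℝ, (∀ b, (f b, S b) ∈ regularizedSum l) ∧
        ∀ n, (fun b => PowerSeries.coeff n (S b)) ∈ stepFiltration Ψ n

namespace HasStepExpansion

variable {f g : (Fin N → ℝ) → (Fin d → ℤ) → ℝ}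

theorem of_mem_invariantSpan {V : Finset (Fin d → ℤ)} (hV : ∀ v ∈ V, v ≠ 0)
    (hf : ∀ b, f b ∈ invariantSpan (V : Set (Fin d → ℤ))) : HasStepExpansion f :=
  ⟨∅, V, hV, fun _ hl => ⟨0, fun b => mem_regularizedSum_of_mem_invariantSpan hl (hf b),
    fun n => by
      simp only [Pi.zero_apply, map_zero]
      exact Submodule.zero_mem _⟩⟩

theorem zero : HasStepExpansion (0 : (Fin N → ℝ) → (Fin d → ℤ) → ℝ) :=
  of_mem_invariantSpan (V := ∅) (by simp) fun _ => Submodule.zero_mem _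

theorem add (hf : HasStepExpansion f) (hg : HasStepExpansion g) : HasStepExpansion (f + g) := by
  classical
  obtain ⟨Ψ, V, hV, hf⟩ := hf
  obtain ⟨Ψ', V', hV', hg⟩ := hg
  refine ⟨Ψ ∪ Ψ', V ∪ V', fun v hv => (Finset.mem_union.mp hv).elim (hV v) (hV' v),
    fun l hl => ?_⟩
  obtain ⟨S, hS, hn⟩ := hf l fun v hv => hl v (Finset.mem_union_left _ hv)
  obtain ⟨S', hS', hn'⟩ := hg l fun v hv => hl v (Finset.mem_union_right _ hv)
  refine ⟨S + S', fun b => Submodule.add_mem _ (hS b) (hS' b), fun n => ?_⟩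
  simp only [Pi.add_apply, map_add]
  exact Submodule.add_mem _ (stepFiltration_mono_left Finset.subset_union_left (hn n))
    (stepFiltration_mono_left Finset.subset_union_right (hn' n))

theorem of_sub_mem_invariantSpan (hf : HasStepExpansion f) {V : Finset (Fin d → ℤ)}
    (hV : ∀ v ∈ V, v ≠ 0) (h : ∀ b, g b - f b ∈ invariantSpan (V : Set (Fin d → ℤ))) :
    HasStepExpansion g := by
  have := hf.add (of_mem_invariantSpan (f := g - f) hV h)
  rwa [add_sub_cancel] at this

theorem list_sum {α : Type*} {L : List α} {F : α → (Fin N → ℝ) → (Fin d → ℤ) → ℝ}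
    (h : ∀ a ∈ L, HasStepExpansion (F a)) :
    HasStepExpansion fun b => (L.map fun a => F a b).sum := by
  induction L with
  | nil => exact zero
  | cons a L ih =>
    simp only [List.map_cons, List.sum_cons]
    exact (h a List.mem_cons_self).add (ih fun c hc => h c (List.mem_cons_of_mem _ hc))

theorem finset_sum {α : Type*} {s : Finset α} {F : α → (Fin N → ℝ) → (Fin d → ℤ) → ℝ}
    (h : ∀ a ∈ s, HasStepExpansion (F a)) : HasStepExpansion (∑ a ∈ s, F a) :=
  Finset.sum_induction F HasStepExpansion (fun _ _ => add) zero h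

theorem coneIndicator {U : Matrix (Fin d) (Fin d) ℤ} (hU : IsUnit U.det)
    (q : Matrix (Fin d) (Fin N) ℚ) :
    HasStepExpansion fun b => coneIndicator U fun i => ∑ j, (q i j : ℝ) * b j := by
  classical
  refine ⟨Finset.univ.image q.row, Finset.univ.image (edgeVector U), ?_, fun l hl => ?_⟩
  · simpa using edgeVector_ne_zero hU
  have hl' : ∀ j, latticePairing l (edgeVector U j) ≠ 0 := by simpa using hl
  obtain ⟨Q, hQ⟩ := exists_coneIndicator_mem_regularizedSum hU hl'
  refine ⟨_, fun b => hQ _, fun n => ?_⟩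
  set E : (Fin N → ℝ) → ℝ := fun b =>
    ∑ i, ⌊∑ j, (q i j : ℝ) * b j⌋ * latticePairing l (edgeVector U i) with hE
  have hmem : E ∈ stepFiltration (Finset.univ.image q.row) 1 := by
    have : E = ∑ i, latticePairing l (edgeVector U i) •
        fun b : Fin N → ℝ => (⌊∑ j, (q.row i j : ℝ) * b j⌋ : ℝ) := by
      ext b
      simp [hE, Finset.sum_apply, mul_comm, Matrix.row]
    rw [this]
    exact Submodule.sum_mem _ fun i _ => Submodule.smul_mem _ _ <|
      floor_mem_stepFiltration (Finset.mem_image_of_mem _ (Finset.mem_univ i))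
  have hcoeff : (fun b => PowerSeries.coeff n (expSeries (E b) * Q)) =
      ∑ p ∈ Finset.HasAntidiagonal.antidiagonal n,
        ((p.1.factorial : ℝ)⁻¹ * PowerSeries.coeff p.2 Q) • E ^ p.1 := by
    ext b
    rw [PowerSeries.coeff_mul, Finset.sum_apply]
    refine Finset.sum_congr rfl fun p _ => ?_
    rw [coeff_expSeries, Pi.smul_apply, Pi.pow_apply, smul_eq_mul]
    ring
  change (fun b => PowerSeries.coeff n (expSeries (E b) * Q)) ∈ _
  rw [hcoeff]
  refine Submodule.sum_mem _ fun p hp => Submodule.smul_mem _ _ ?_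
  have hle : p.1 ≤ n := (Finset.HasAntidiagonal.mem_antidiagonal.mp hp).le.trans' le_self_add
  exact stepFiltration_mono hle (pow_mem_stepFiltration hmem p.1)

theorem sum_intCast_mul_sum_ratCast_mul {r : ℕ} (M : Matrix (Fin r) (Fin d) ℤ)
    (q : Matrix (Fin d) (Fin N) ℚ) (b : Fin N → ℝ) (i : Fin r) :
    ∑ k, (M i k : ℝ) * ∑ j, (q k j : ℝ) * b j =
      ∑ j, (((M.map (Int.cast : ℤ → ℚ) * q) i j : ℚ) : ℝ) * b j := by
  simp only [Finset.mul_sum, Matrix.mul_apply, Matrix.map_apply, Rat.cast_sum, Rat.cast_mul,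
    Rat.cast_intCast, Finset.sum_mul, mul_assoc]
  exact Finset.sum_comm

theorem prod_halfSpaceIndicator_add (A : Matrix (Fin N) (Fin d) ℤ) (σ : Fin d → Fin N)
    (hσ : (A.submatrix σ id).det ≠ 0) (a : Fin d → ℝ) :
    HasStepExpansion fun b x =>
      ∏ i, (halfSpaceIndicator (A.row (σ i)) (b (σ i)) x + a i) := by
  classical
  set M := A.submatrix σ id with hM
  set Mq := M.map (Int.cast : ℤ → ℚ)
  set E : Matrix (Fin d) (Fin N) ℚ := fun r j => if σ r = j then 1 else 0 with hE
  have hdet : IsUnit Mq.det := by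
    have : Mq.det = (M.det : ℚ) := (Int.cast_det M).symm
    rw [this]
    exact (Int.cast_ne_zero.mpr hσ).isUnit
  have hMq : Mq * (Mq⁻¹ * E) = E := by
    rw [← Matrix.mul_assoc, Matrix.mul_nonsing_inv _ hdet, Matrix.one_mul]
  let s : (Fin N → ℝ) → Fin d → ℝ := fun b k => ∑ j, ((Mq⁻¹ * E) k j : ℝ) * b j
  have hcone : ∀ b : Fin N → ℝ, coneAt M (s b) = _root_.coneIndicator M fun i => b (σ i) := by
    intro b
    refine congrArg (_root_.coneIndicator M) (funext fun i => ?_)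
    refine (sum_intCast_mul_sum_ratCast_mul M _ b i).trans ?_
    change ∑ j, (((Mq * (Mq⁻¹ * E)) i j : ℚ) : ℝ) * b j = _
    rw [hMq, Finset.sum_eq_single_of_mem (σ i) (Finset.mem_univ _)]
    · simp [hE]
    · intro j _ hj
      simp [hE, hj.symm]
  obtain ⟨Us, V, hUs, hV, hdec⟩ := exists_unimodular_decomposition M hσ
  obtain ⟨V', hV', hprod⟩ := exists_prod_halfSpaceIndicator_add_sub_mem M
  have hlist : HasStepExpansion fun b => (Us.map fun U => coneAt U (s b)).sum := by
    refine list_sum (F := fun U b => coneAt U (s b)) fun U hU => ?_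
    have hUq : (fun b => coneAt U (s b)) = fun b : Fin N → ℝ => _root_.coneIndicator U fun i =>
        ∑ j, (((U.map (Int.cast : ℤ → ℚ) * (Mq⁻¹ * E)) i j : ℚ) : ℝ) * b j := by
      ext b x
      exact congrArg (fun t => _root_.coneIndicator U t x)
        (funext fun i => sum_intCast_mul_sum_ratCast_mul U _ b i)
    rw [hUq]
    exact coneIndicator (hUs U hU) _
  refine (hlist.of_sub_mem_invariantSpan hV fun b => hdec (s b)).of_sub_mem_invariantSpan hV'
    fun b => ?_
  rw [hcone]
  exact hprod (fun i => b (σ i)) a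

/-- The power sums of finitely supported functions with a step-expansion. -/
theorem exists_sum_pow_eq (hf : HasStepExpansion f) :
    ∃ (Ψ : Finset (Fin N → ℚ)) (V : Finset (Fin d → ℤ)), (∀ v ∈ V, v ≠ 0) ∧
      ∀ (l : Fin d → ℝ) (m : ℕ), (∀ v ∈ V, latticePairing l v ≠ 0) →
        ∃ F ∈ stepFiltration Ψ (d + m), ∀ (b : Fin N → ℝ) (p : (Fin d → ℤ) →₀ ℝ), f b = p →
          F b = p.sum fun x a => a * latticePairing l x ^ m := by
  obtain ⟨Ψ, V, hV, hS⟩ := hf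
  refine ⟨Ψ, V, hV, fun l m hl => ?_⟩
  obtain ⟨S, hS, hn⟩ := hS l hl
  refine ⟨_, Submodule.smul_mem _ (m.factorial : ℝ) (hn (d + m)), fun b p hp => ?_⟩
  have hmem := Submodule.sub_mem _ (hS b) (coe_mem_regularizedSum (l := l) p)
  rw [Prod.mk_sub_mk, hp, sub_self] at hmem
  have hSb := sub_eq_zero.mp (eq_zero_of_mem_regularizedSum hmem)
  rw [Pi.smul_apply, hSb, add_comm d m, PowerSeries.coeff_X_pow_mul, expSum,
    Finsupp.linearCombination_apply, Finsupp.sum, map_sum, Finset.smul_sum]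
  refine Finset.sum_congr rfl fun x _ => ?_
  have hm : (m.factorial : ℝ) ≠ 0 := Nat.cast_ne_zero.mpr m.factorial_ne_zero
  rw [PowerSeries.coeff_smul, coeff_expSeries]
  simp only [smul_eq_mul]
  field_simp

end HasStepExpansion

end expansion

/-! ### Weighted lattice point sums over the polytopes of a chamber -/

section latticeSum

open Module

variable {d N : ℕ}

theorem det_submatrix_ne_zero {A : Matrix (Fin N) (Fin d) ℤ} {σ : Fin d → Fin N}
    (h : ∀ x : Fin d → ℝ, (∀ i, ∑ k, (A (σ i) k : ℝ) * x k = 0) → x = 0) :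
    (A.submatrix σ id).det ≠ 0 := by
  intro hdet
  obtain ⟨v, hv, hMv⟩ := Matrix.exists_mulVec_eq_zero_iff.mpr hdet
  have hzero := h (fun k => (v k : ℝ)) fun i => by
    have := congrFun hMv i
    simp only [Matrix.mulVec, dotProduct, Matrix.submatrix_apply, id_eq, Pi.zero_apply] at this
    exact_mod_cast this
  exact hv (funext fun k => Int.cast_eq_zero.mp (congrFun hzero k))

variable {μ : Fin N → Dual ℝ (Fin d → ℝ)} {A : Matrix (Fin N) (Fin d) ℤ} {b₀ : Fin N → ℝ}
  {𝓕 : Finset (Finset (Fin N))} {w : Finset (Fin N) → Fin N → Fin d → ℝ}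

theorem halfSpaceIndicator_eq_ite (hA : ∀ j x, μ j x = ∑ i, (A j i : ℝ) * x i) (j : Fin N) (t : ℝ)
    (x : Fin d → ℤ) :
    halfSpaceIndicator (A.row j) t x = if μ j (fun i => (x i : ℝ)) ≤ t then 1 else 0 := by
  rw [halfSpaceIndicator, hA]
  simp [dotProduct, Matrix.row]

namespace IsSimpleVertexSystem

theorem hasStepExpansion (h : IsSimpleVertexSystem μ b₀ 𝓕 w)
    (hA : ∀ j x, μ j x = ∑ i, (A j i : ℝ) * x i) (hcard : ∀ B ∈ 𝓕, B.card = d)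
    (a : Finset (Fin N) → Fin N → ℝ) :
    HasStepExpansion (∑ B ∈ 𝓕, fun b x =>
      ∏ j ∈ B, (halfSpaceIndicator (A.row j) (b j) x + a B j)) := by
  refine HasStepExpansion.finset_sum fun B hB => ?_
  set σ := B.orderEmbOfFin (hcard B hB)
  have hσ : ∀ g : Fin N → ℝ, ∏ j ∈ B, g j = ∏ i, g (σ i) := by
    intro g
    conv_lhs => rw [← Finset.map_orderEmbOfFin_univ B (hcard B hB)]
    exact Finset.prod_map _ _ _
  simp only [hσ]
  refine HasStepExpansion.prod_halfSpaceIndicator_add A σ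
    (det_submatrix_ne_zero fun x hx => h.separating B hB x fun j hj => ?_) fun i => a B (σ i)
  have hj' : j ∈ Set.range σ := by
    rwa [Finset.range_orderEmbOfFin, Finset.mem_coe]
  obtain ⟨i, rfl⟩ := hj'
  rw [hA, hx i]

theorem exists_stepFiltration_sum_eval (h : IsSimpleVertexSystem μ b₀ 𝓕 w)
    (hA : ∀ j x, μ j x = ∑ i, (A j i : ℝ) * x i) (hcard : ∀ B ∈ 𝓕, B.card = d)
    (hfin : ∀ b : Fin N → ℝ, {x : Fin d → ℤ | ∀ j, μ j (fun i => (x i : ℝ)) ≤ b j}.Finite)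
    {m : ℕ} {p : MvPolynomial (Fin d) ℝ} (hp : p.IsHomogeneous m) :
    ∃ Ψ, ∃ F ∈ stepFiltration Ψ (d + m), ∀ b : Fin N → ℝ,
      (∀ B ∈ 𝓕, ∀ k ∉ B, μ k (∑ j ∈ B, b j • w B j) ≤ b k) →
      ∑ x ∈ (hfin b).toFinset, MvPolynomial.eval (fun i => (x i : ℝ)) p = F b := by
  classical
  obtain ⟨ξ, hξ, -⟩ := exists_dual_forall_ne_zero_and_neg
    (S := ⋃ B ∈ 𝓕, w B '' B) (T := (∅ : Set (Fin d → ℝ)))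
    (𝓕.finite_toSet.biUnion fun B _ => B.finite_toSet.image _) Set.finite_empty
    (by
      simp only [Set.mem_iUnion]
      rintro _ ⟨B, hB, i, hi, rfl⟩
      exact h.isPivotSystem.ne_zero hB hi) 0 (by simp)
  have hξ' : ∀ B ∈ 𝓕, ∀ i ∈ B, ξ (w B i) ≠ 0 := fun B hB i hi =>
    hξ _ (Set.mem_biUnion hB ⟨i, hi, rfl⟩)
  obtain ⟨Ψ, V, hV, hpow⟩ := (h.hasStepExpansion hA hcard
    fun B j => (if 0 < ξ (w B j) then 1 else 0) - 1).exists_sum_pow_eq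
  refine ⟨Ψ, ?_⟩
  have hspan := isHomogeneous_mem_span_pow hp V hV
  clear hp
  induction hspan using Submodule.span_induction with
  | mem p hp =>
    obtain ⟨l, hl, rfl⟩ := hp
    obtain ⟨F, hF, hFb⟩ := hpow l m hl
    refine ⟨F, hF, fun b hb => ?_⟩
    rw [hFb b (Finsupp.onFinset (hfin b).toFinset
      (fun x => if ∀ j, μ j (fun i => (x i : ℝ)) ≤ b j then 1 else 0) (by simp)),
      Finsupp.onFinset_sum _ (by simp)]
    · refine Finset.sum_congr rfl fun x hx => ?_
      have hx' : ∀ j, μ j (fun i => (x i : ℝ)) ≤ b j := (hfin b).mem_toFinset.mp hx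
      rw [if_pos hx']
      simp [latticePairing]
    · ext x
      rw [Finsupp.onFinset_apply, ← h.polarSum_eq_indicator hξ' hb, polarSum, Finset.sum_apply,
        Finset.sum_apply]
      refine Finset.sum_congr rfl fun B _ => Finset.prod_congr rfl fun j _ => ?_
      rw [halfSpaceIndicator_eq_ite hA]
      split_ifs <;> ring
  | zero => exact ⟨0, Submodule.zero_mem _, fun b _ => by simp⟩
  | add p q _ _ hp hq =>
    obtain ⟨F, hF, hFb⟩ := hp
    obtain ⟨G, hG, hGb⟩ := hq
    refine ⟨F + G, Submodule.add_mem _ hF hG, fun b hb => ?_⟩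
    rw [Pi.add_apply, ← hFb b hb, ← hGb b hb, ← Finset.sum_add_distrib]
    simp
  | smul c p _ hp =>
    obtain ⟨F, hF, hFb⟩ := hp
    refine ⟨c • F, Submodule.smul_mem _ _ hF, fun b hb => ?_⟩
    rw [Pi.smul_apply, ← hFb b hb, Finset.smul_sum]
    simp

end IsSimpleVertexSystem

end latticeSum

/-! ### The leading part as a limit -/

section asymptotics

open Filter Topology Module

open scoped Pointwise

variable {d N : ℕ}

theorem MvPolynomial.IsHomogeneous.eval_smul_eq {σ R : Type*} [Fintype σ] [CommSemiring R] {m : ℕ}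
    {p : MvPolynomial σ R} (hp : p.IsHomogeneous m) (a : R) (x : σ → R) :
    MvPolynomial.eval (a • x) p = a ^ m * MvPolynomial.eval x p := by
  rw [MvPolynomial.eval_eq', MvPolynomial.eval_eq', Finset.mul_sum]
  refine Finset.sum_congr rfl fun k hk => ?_
  have hdeg : ∑ i, k i = m := by
    have := hp (MvPolynomial.mem_support_iff.mp hk)
    simpa [Finsupp.weight_apply, Finsupp.sum_fintype] using this
  simp only [Pi.smul_apply, smul_eq_mul, mul_pow, Finset.prod_mul_distrib,
    Finset.prod_pow_eq_pow_sum, hdeg]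
  ring

theorem Bornology.IsBounded.finite_setOf_intCast_mem {s : Set (Fin d → ℝ)}
    (hs : Bornology.IsBounded s) : {x : Fin d → ℤ | (fun i => (x i : ℝ)) ∈ s}.Finite := by
  obtain ⟨C, hC⟩ := hs.exists_norm_le
  refine (Set.finite_Icc (fun _ => -⌈C⌉) fun _ => ⌈C⌉).subset fun x hx => ?_
  have hle : ∀ i, |x i| ≤ ⌈C⌉ := fun i => by
    have := ((norm_le_pi_norm _ i).trans (hC _ hx)).trans (Int.le_ceil C)
    rw [Real.norm_eq_abs] at this
    exact_mod_cast this
  exact ⟨fun i => (abs_le.mp (hle i)).1, fun i => (abs_le.mp (hle i)).2⟩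

/-- The integral of a homogeneous polynomial as a limit of weighted lattice point sums over
dilates. -/
theorem tendsto_sum_eval_div_pow {s : Set (Fin d → ℝ)} (hb : Bornology.IsBounded s)
    (hm : MeasurableSet s) (hfr : volume (frontier s) = 0) {m : ℕ} {p : MvPolynomial (Fin d) ℝ}
    (hp : p.IsHomogeneous m) :
    Tendsto (fun n : ℕ =>
      (∑ᶠ x ∈ {x : Fin d → ℤ | (n : ℝ)⁻¹ • (fun i => (x i : ℝ)) ∈ s},
        MvPolynomial.eval (fun i => (x i : ℝ)) p) / (n : ℝ) ^ (d + m)) atTop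
      (𝓝 (∫ x in s, MvPolynomial.eval x p)) := by
  have hlim := tendsto_tsum_div_pow_atTop_integral s (fun x => MvPolynomial.eval x p)
    p.continuous_eval hb hm hfr
  refine hlim.congr' ?_
  filter_upwards [eventually_gt_atTop 0] with n hn
  have hn0 : (n : ℝ) ≠ 0 := Nat.cast_ne_zero.mpr hn.ne'
  set g : (Fin d → ℤ) → Fin d → ℝ := fun x => (n : ℝ)⁻¹ • fun i => (x i : ℝ) with hg
  have hinj : Function.Injective g := fun x y hxy => funext fun i => by
    have := congrFun (smul_right_injective (Fin d → ℝ) (inv_ne_zero hn0) hxy) i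
    exact Int.cast_injective this
  have himage : s ∩ (n : ℝ)⁻¹ •
      (Submodule.span ℤ (Set.range (Pi.basisFun ℝ (Fin d))) : Set (Fin d → ℝ)) =
      g '' {x | g x ∈ s} := by
    ext y
    constructor
    · rintro ⟨hy, z, hz, rfl⟩
      have hz' := (Basis.mem_span_iff_repr_mem ℤ (Pi.basisFun ℝ (Fin d)) z).mp hz
      choose x hx using hz'
      have hxz : (fun i => (x i : ℝ)) = z := funext fun i => by simpa using hx i
      have hgx : g x = (n : ℝ)⁻¹ • z := by rw [hg, ← hxz]
      exact ⟨x, by rwa [Set.mem_ofPred_eq, hgx], hgx⟩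
    · rintro ⟨x, hx, rfl⟩
      refine ⟨hx, _, (Basis.mem_span_iff_repr_mem ℤ (Pi.basisFun ℝ (Fin d)) _).mpr ?_, rfl⟩
      exact fun i => ⟨x i, by simp⟩
  have hfin : {x | g x ∈ s}.Finite := by
    refine (hb.smul₀ (n : ℝ)).finite_setOf_intCast_mem.subset fun x hx => ?_
    refine ⟨g x, hx, ?_⟩
    simp only [hg]
    rw [smul_inv_smul₀ hn0]
  have htsum : ∑' x : {x | g x ∈ s}, MvPolynomial.eval (g x) p =
      ∑ x ∈ hfin.toFinset, MvPolynomial.eval (g x) p := by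
    rw [← Finset.tsum_subtype', hfin.coe_toFinset]
  change _ = (∑ᶠ x ∈ {x | g x ∈ s}, MvPolynomial.eval (fun i => (x i : ℝ)) p) / _
  rw [tsum_congr_set_coe (fun x => MvPolynomial.eval x p) himage,
    tsum_image (fun x => MvPolynomial.eval x p) hinj.injOn, Fintype.card_fin, htsum,
    finsum_mem_eq_finite_toFinset_sum _ hfin, Finset.sum_div, Finset.sum_div]
  refine Finset.sum_congr rfl fun x _ => ?_
  rw [hg, hp.eval_smul_eq, pow_add, inv_pow]
  field_simp

/-- The leading coefficient along a ray of a polynomial with step-polynomial coefficients. -/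
theorem tendsto_finsum_isStepPoly_div_pow {Ψ : Finset (Fin N → ℚ)} {k : ℕ}
    {c : (Fin N → ℕ) → (Fin N → ℝ) → ℝ}
    (hc : ∀ α : Fin N → ℕ, ∑ i, α i ≤ k → IsStepPoly Ψ (k - ∑ i, α i) (c α)) (b : Fin N → ℝ) :
    Tendsto (fun n : ℕ => (∑ᶠ α ∈ {α : Fin N → ℕ | ∑ i, α i ≤ k},
      c α ((n : ℝ) • b) * ∏ i, ((n : ℝ) • b) i ^ α i) / (n : ℝ) ^ k) atTop
      (𝓝 (∑ᶠ α ∈ {α : Fin N → ℕ | ∑ i, α i = k}, c α b * ∏ i, b i ^ α i)) := by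
  classical
  have hfin := finite_setOf_sum_le N k
  have htop : ∑ᶠ α ∈ {α : Fin N → ℕ | ∑ i, α i = k}, c α b * ∏ i, b i ^ α i =
      ∑ α ∈ hfin.toFinset, if ∑ i, α i = k then c α b * ∏ i, b i ^ α i else 0 := by
    rw [← Finset.sum_filter]
    refine finsum_mem_eq_sum_of_inter_support_eq _ ?_
    congr 1
    ext α
    simp only [Set.mem_ofPred_eq, Finset.coe_filter, Set.Finite.mem_toFinset]
    exact ⟨fun h => ⟨h.le, h⟩, fun h => h.2⟩
  rw [htop]
  simp only [finsum_mem_eq_finite_toFinset_sum _ hfin, Finset.sum_div]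
  refine tendsto_finsetSum _ fun α hα => ?_
  have hle : ∑ i, α i ≤ k := hfin.mem_toFinset.mp hα
  have hprod : ∀ n : ℕ, ∏ i, ((n : ℝ) • b) i ^ α i =
      (n : ℝ) ^ (∑ i, α i) * ∏ i, b i ^ α i := fun n => by
    simp only [Pi.smul_apply, smul_eq_mul, mul_pow, Finset.prod_mul_distrib,
      Finset.prod_pow_eq_pow_sum]
  simp only [hprod]
  split_ifs with hα'
  · refine tendsto_const_nhds.congr' ?_
    filter_upwards [eventually_gt_atTop 0] with n hn
    have hn0 : (n : ℝ) ≠ 0 := Nat.cast_ne_zero.mpr hn.ne'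
    have hstep := hc α hle
    rw [hα', Nat.sub_self] at hstep
    rw [hstep.eq_of_zero ((n : ℝ) • b) b, hα']
    field_simp
  · obtain ⟨C, hC⟩ := (hc α hle).exists_forall_abs_le
    obtain ⟨r, hr⟩ : ∃ r, k = ∑ i, α i + (r + 1) :=
      ⟨k - ∑ i, α i - 1, by have := lt_of_le_of_ne hle hα'; omega⟩
    have hinv : Tendsto (fun n : ℕ => ((n : ℝ) ^ (r + 1))⁻¹) atTop (𝓝 0) :=
      ((tendsto_pow_atTop (Nat.succ_ne_zero r)).comp tendsto_natCast_atTop_atTop).inv_tendsto_atTop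
    have hbdd : IsBoundedUnder (· ≤ ·) atTop
        (norm ∘ fun n : ℕ => c α ((n : ℝ) • b) * ∏ i, b i ^ α i) := by
      refine isBoundedUnder_of ⟨C * |∏ i, b i ^ α i|, fun n => ?_⟩
      rw [Function.comp_apply, norm_mul, Real.norm_eq_abs, Real.norm_eq_abs]
      exact mul_le_mul_of_nonneg_right (hC _) (abs_nonneg _)
    refine (hinv.zero_mul_isBoundedUnder_le hbdd).congr' ?_
    filter_upwards [eventually_gt_atTop 0] with n hn
    have hn0 : (n : ℝ) ≠ 0 := Nat.cast_ne_zero.mpr hn.ne'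
    rw [hr]
    field_simp
    ring

end asymptotics

theorem stmt_0
    (d N m : ℕ) (hd : 1 ≤ d) (hN : 1 ≤ N)
    -- the linear forms μ_j, with integer coefficients
    (μ : Fin N → ((Fin d → ℝ) →ₗ[ℝ] ℝ))
    (hμint : ∀ j, ∃ z : Fin d → ℤ, ∀ x, μ j x = ∑ i, (z i : ℝ) * x i)
    -- the μ_j generate the dual space as a cone
    (hgen : ∀ ξ : (Fin d → ℝ) →ₗ[ℝ] ℝ,
      ∃ c : Fin N → ℝ, (∀ j, 0 ≤ c j) ∧ ξ = ∑ j, c j • μ j)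
    -- the parametric polytope P(b)
    (P : (Fin N → ℝ) → Set (Fin d → ℝ))
    (hP : ∀ b, P b = {x | ∀ j, μ j x ≤ b j})
    -- 𝓑 : subsets B such that (μ_j)_{j ∈ B} is a basis of the dual space
    (𝓑 : Set (Finset (Fin N)))
    (h𝓑 : ∀ B : Finset (Fin N), B ∈ 𝓑 ↔
      (LinearIndependent ℝ (fun j : {j // j ∈ B} => μ j.1) ∧
        Submodule.span ℝ (Set.range (fun j : {j // j ∈ B} => μ j.1)) = ⊤))
    -- the vertex maps s_B
    (sB : Finset (Fin N) → ((Fin N → ℝ) →ₗ[ℝ] (Fin d → ℝ)))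
    (hsB : ∀ B ∈ 𝓑, ∀ b : Fin N → ℝ, ∀ j ∈ B, μ j (sB B b) = b j)
    -- the cones d_B
    (dB : Finset (Fin N) → Set (Fin N → ℝ))
    (hdB : ∀ B, dB B = {b | ∀ k ∉ B, μ k (sB B b) ≤ b k})
    -- τ is a μ-chamber: a connected component of the complement of the union of
    -- the boundaries of the cones d_B, B ∈ 𝓑
    (τ : Set (Fin N → ℝ))
    (hτ : ∃ b₀ ∈ {b : Fin N → ℝ | ∀ B ∈ 𝓑, b ∉ frontier (dB B)},
      τ = connectedComponentIn {b : Fin N → ℝ | ∀ B ∈ 𝓑, b ∉ frontier (dB B)} b₀)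
    -- τ is admissible
    (hadm : ∀ b ∈ τ, (P b).Nonempty)
    -- h is a homogeneous polynomial of degree m
    (h : MvPolynomial (Fin d) ℝ) (hh : h.IsHomogeneous m) :
    ∃ (Ψ : Finset (Fin N → ℚ)) (c : (Fin N → ℕ) → (Fin N → ℝ) → ℝ),
      (∀ α : Fin N → ℕ, (∑ i, α i) ≤ d + m →
        IsStepPoly Ψ (d + m - ∑ i, α i) (c α)) ∧
      ∀ b ∈ closure τ,
        -- (a) the discrete weighted sum is the quasi-polynomial
        ((∑ᶠ x ∈ {x : Fin d → ℤ | (fun i => (x i : ℝ)) ∈ P b},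
            MvPolynomial.eval (fun i => (x i : ℝ)) h) =
          ∑ᶠ α ∈ {α : Fin N → ℕ | (∑ i, α i) ≤ d + m},
            c α b * ∏ i, b i ^ α i) ∧
        -- (b) the top-degree part is the integral
        ((∑ᶠ α ∈ {α : Fin N → ℕ | (∑ i, α i) = d + m},
            c α b * ∏ i, b i ^ α i) =
          ∫ x in P b, MvPolynomial.eval x h) := by
  classical
  obtain ⟨b₀, hb₀, rfl⟩ := hτ
  choose A hA using hμint
  set 𝓕 : Finset (Finset (Fin N)) := {B | B ∈ 𝓑 ∧ b₀ ∈ dB B} with h𝓕def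
  have h𝓕 : ∀ B, B ∈ 𝓕 ↔ B ∈ 𝓑 ∧ ∀ k ∉ B, μ k (sB B b₀) ≤ b₀ k := fun B => by
    simp [h𝓕def, hdB]
  have hmem₀ := mem_connectedComponentIn hb₀
  have hne : {x | ∀ j, μ j x ≤ b₀ j}.Nonempty := hP b₀ ▸ hadm b₀ hmem₀
  have hsys := isSimpleVertexSystem_of_chamber hgen h𝓑 hsB
    (fun B hB => hdB B ▸ hb₀ B hB) hne h𝓕
  have hcard : ∀ B ∈ 𝓕, B.card = d := fun B hB => by
    simpa using (linearIndependent_and_span_eq_top_iff.mp ((h𝓑 B).mp ((h𝓕 B).mp hB).1)).1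
  have hfin : ∀ b : Fin N → ℝ,
      {x : Fin d → ℤ | ∀ j, μ j (fun i => (x i : ℝ)) ≤ b j}.Finite := fun b =>
    (isBounded_polyhedron hgen b).finite_setOf_intCast_mem
  have hclosed : ∀ B, IsClosed (dB B) := fun B => by
    rw [hdB]
    simp only [Set.ofPred_forall]
    exact isClosed_iInter fun k => isClosed_iInter fun _ =>
      isClosed_le ((μ k).comp (sB B)).continuous_of_finiteDimensional (continuous_apply k)
  have hsub : ∀ x ∈ connectedComponentIn {b : Fin N → ℝ | ∀ B ∈ 𝓑, b ∉ frontier (dB B)} b₀,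
      ∀ B ∈ 𝓑, x ∉ frontier (dB B) := fun x hx => connectedComponentIn_subset _ _ hx
  have hclosure : ∀ b ∈ closure (connectedComponentIn
      {b : Fin N → ℝ | ∀ B ∈ 𝓑, b ∉ frontier (dB B)} b₀), ∀ (n : ℕ), ∀ B ∈ 𝓕, ∀ k ∉ B,
      μ k (∑ j ∈ B, ((n : ℝ) • b) j • sB B (Pi.single j 1)) ≤ ((n : ℝ) • b) k := by
    intro b hb n B hB k hk
    have hB' := (h𝓕 B).mp hB
    have hbD : b ∈ dB B := isPreconnected_connectedComponentIn.closure_subset_of_disjoint_frontier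
      (hclosed B)
      (Set.disjoint_left.mpr fun x hx => hsub x hx B hB'.1)
      ⟨b₀, hmem₀, hdB B ▸ hB'.2⟩ hb
    rw [hdB] at hbD
    rw [sum_smul_vertexMap_single (hsys.separating B hB) (hsB B hB'.1), map_smul, map_smul,
      smul_eq_mul, Pi.smul_apply, smul_eq_mul]
    exact mul_le_mul_of_nonneg_left (hbD k hk) n.cast_nonneg
  obtain ⟨Ψ, F, hF, hsum⟩ := hsys.exists_stepFiltration_sum_eval hA hcard hfin hh
  obtain ⟨c, hc, hFc⟩ := exists_isStepPoly_of_mem_stepFiltration hF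
  have heq : ∀ b ∈ closure (connectedComponentIn
      {b : Fin N → ℝ | ∀ B ∈ 𝓑, b ∉ frontier (dB B)} b₀), ∀ n : ℕ,
      ∑ᶠ x ∈ {x : Fin d → ℤ | ∀ j, μ j (fun i => (x i : ℝ)) ≤ ((n : ℝ) • b) j},
        MvPolynomial.eval (fun i => (x i : ℝ)) h =
      ∑ᶠ α ∈ {α : Fin N → ℕ | (∑ i, α i) ≤ d + m},
        c α ((n : ℝ) • b) * ∏ i, ((n : ℝ) • b) i ^ α i := fun b hb n => by
    rw [← hFc, ← hsum _ (hclosure b hb n), finsum_mem_eq_finite_toFinset_sum]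
  refine ⟨Ψ, c, hc, fun b hb => ⟨?_, ?_⟩⟩
  · have h1 := heq b hb 1
    rw [Nat.cast_one, one_smul] at h1
    rw [hP]
    exact h1
  · rw [hP]
    have h_int := tendsto_sum_eval_div_pow (isBounded_polyhedron hgen b)
      (isClosed_polyhedron b).measurableSet ((convex_polyhedron b).addHaar_frontier volume) hh
    refine tendsto_nhds_unique (tendsto_finsum_isStepPoly_div_pow hc b)
      (h_int.congr' ((Filter.eventually_gt_atTop 0).mono fun n hn => ?_))
    have hn0 : (0 : ℝ) < n := Nat.cast_pos.mpr hn
    beta_reduce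
    rw [← heq b hb n]
    have hset : {x : Fin d → ℤ | (n : ℝ)⁻¹ • (fun i => (x i : ℝ)) ∈ {x | ∀ j, μ j x ≤ b j}} =
        {x : Fin d → ℤ | ∀ j, μ j (fun i => (x i : ℝ)) ≤ ((n : ℝ) • b) j} := by
      ext x
      refine forall_congr' fun j => ?_
      rw [map_smul, smul_eq_mul, Pi.smul_apply, smul_eq_mul, inv_mul_le_iff₀ hn0]
    rw [← hset]
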